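/- arXiv:2510.09929 — 3 statements merged into one kernel-verified Lean document; each statement's English description precedes it below -/
import Mathlib

section
/- Let g : ℝ^n → [0,∞) be continuous and α be a locally Lipschitz class K function. Define w : ℝ^n × [0,∞) → [0,∞) by w(x,T) = sup over pairs (u, ξ) of control signals u ∈ 𝕌 and admissible trajectories ξ from x under u of min_{t ∈ [0,T]} β_α(g(ξ(t)), T − t). Then w is continuous, satisfies w(·,0) = g, and is the unique continuous function ℝ^n × [0,∞) → [0,∞) with this initial condition that is a viscosity solution on ℝ^n × (0,∞) of max{ ∂_T w − H(x, ∇w), w − β_α(g(x), T) } = 0, where H(x,λ) = max_{u ∈ U} λ · f(x,u). -/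
open Set Filter MeasureTheory Topology

noncomputable section

/-- `α : [0,∞) → [0,∞)` is a class `K` function: continuous, strictly increasing, `α 0 = 0`. -/
def IsClassK (α : ℝ → ℝ) : Prop :=
  ContinuousOn α (Set.Ici 0) ∧ StrictMonoOn α (Set.Ici 0) ∧ α 0 = 0

/-- `α` is a locally Lipschitz class `K` function on `[0,∞)`. -/
def IsLocallyLipschitzClassK (α : ℝ → ℝ) : Prop :=
  IsClassK α ∧
    ∀ x ∈ Set.Ici (0 : ℝ), ∃ K : NNReal, ∃ s ∈ nhdsWithin x (Set.Ici (0 : ℝ)),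
      LipschitzOnWith K α s

/-- `β` is the function `β_α`: for each `r ≥ 0`, `t ↦ β r t` solves `y' = -α y`, `y 0 = r`,
staying in `[0, r]` for all `t ≥ 0`. -/
def IsBetaFor (α : ℝ → ℝ) (β : ℝ → ℝ → ℝ) : Prop :=
  ∀ r : ℝ, 0 ≤ r →
    β r 0 = r ∧ ∀ t : ℝ, 0 ≤ t →
      0 ≤ β r t ∧ β r t ≤ r ∧ HasDerivWithinAt (β r) (-α (β r t)) (Set.Ici 0) t

/-- `u` is an admissible control signal: measurable, valued in `U` on `[0,∞)`. -/
def IsControl {m : ℕ} (U : Set (Fin m → ℝ)) (u : ℝ → Fin m → ℝ) : Prop :=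
  Measurable u ∧ ∀ t : ℝ, 0 ≤ t → u t ∈ U

/-- `ξ` is an admissible trajectory from `x` under the control signal `u`. -/
def IsTrajectory {n m : ℕ} (f : (Fin n → ℝ) → (Fin m → ℝ) → Fin n → ℝ)
    (x : Fin n → ℝ) (u : ℝ → Fin m → ℝ) (ξ : ℝ → Fin n → ℝ) : Prop :=
  Continuous ξ ∧ ∀ t : ℝ, 0 ≤ t → ξ t = x + ∫ s in (0 : ℝ)..t, f (ξ s) (u s)

/-- The anti-discounted payoff defining the CB-VF: the supremum over control signals `u`
and admissible trajectories `ξ` from `x` of `min_{t ∈ [0,T]} β_α (g (ξ t)) (T - t)`. -/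
def cbvfPayoff {n m : ℕ} (f : (Fin n → ℝ) → (Fin m → ℝ) → Fin n → ℝ)
    (U : Set (Fin m → ℝ)) (β : ℝ → ℝ → ℝ) (g : (Fin n → ℝ) → ℝ)
    (x : Fin n → ℝ) (T : ℝ) : ℝ :=
  sSup {y : ℝ | ∃ u ξ, IsControl U u ∧ IsTrajectory f x u ξ ∧
    y = sInf ((fun t => β (g (ξ t)) (T - t)) '' Set.Icc 0 T)}

/-- `w` is a viscosity solution on `ℝⁿ × (0,∞)` of the HJ-PDE
`max { ∂_T w - H(x, ∇w), w - β_α (g x) T } = 0`, where `H(x,λ) = max_{u ∈ U} λ · f(x,u)`. -/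
def IsViscositySolnW {n m : ℕ} (f : (Fin n → ℝ) → (Fin m → ℝ) → Fin n → ℝ)
    (U : Set (Fin m → ℝ)) (β : ℝ → ℝ → ℝ) (g : (Fin n → ℝ) → ℝ)
    (w : (Fin n → ℝ) × ℝ → ℝ) : Prop :=
  (∀ p : (Fin n → ℝ) × ℝ, 0 < p.2 →
    ∀ φ : (Fin n → ℝ) × ℝ → ℝ, ContDiff ℝ 1 φ →
      IsLocalMax (fun q => w q - φ q) p →
      max (fderiv ℝ φ p ((0, 1) : (Fin n → ℝ) × ℝ) -
          sSup ((fun u => fderiv ℝ φ p (f p.1 u, 0)) '' U))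
        (w p - β (g p.1) p.2) ≤ 0) ∧
  (∀ p : (Fin n → ℝ) × ℝ, 0 < p.2 →
    ∀ φ : (Fin n → ℝ) × ℝ → ℝ, ContDiff ℝ 1 φ →
      IsLocalMin (fun q => w q - φ q) p →
      0 ≤ max (fderiv ℝ φ p ((0, 1) : (Fin n → ℝ) × ℝ) -
          sSup ((fun u => fderiv ℝ φ p (f p.1 u, 0)) '' U))
        (w p - β (g p.1) p.2))

/-!
The argument works for an arbitrary continuous obstacle `ψ (x, T)`, here `ψ = β_α (g x) T`, which is
continuous because solutions of `y' = -α y` do not separate when `α` is monotone.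

The value `w` is the value of an obstacle control problem: trajectories exist by a Picard iteration
and depend Lipschitz-continuously on the data by Grönwall's inequality, so `w` is continuous.
Shifting and concatenating trajectories gives the dynamic programming principle. Inserting a
constant control, respectively a nearly optimal one, over a short time gives the two viscosity
inequalities.

For uniqueness, compare a subsolution `w₁` with a supersolution `w₂`. For large `c` the function
`ρ = exp (c T) (1 + |x| ^ 2)` satisfies `∂_T ρ ≥ H(x, ∇ρ) + 1`, so `M exp (l (ρ - R))` is a strict
smooth barrier on `{ρ ≤ R}`. Doubling variables shows that `w₁ - w₂`
stays below the barrier, because at a doubled maximum where the obstacle inequalities are inactive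
the Hamiltonians contradict its strictness; letting `l → ∞` gives `w₁ ≤ w₂` wherever `ρ < R`.
-/

open scoped NNReal BoundedContinuousFunction

section Decay

variable {α : ℝ → ℝ}

theorem abs_sub_le_initial_of_hasDerivWithinAt_neg_monotoneOn {s : Set ℝ} (hα : MonotoneOn α s)
    {y₁ y₂ : ℝ → ℝ} (hy₁s : ∀ t, 0 ≤ t → y₁ t ∈ s) (hy₂s : ∀ t, 0 ≤ t → y₂ t ∈ s)
    (hy₁ : ∀ t, 0 ≤ t → HasDerivWithinAt y₁ (-α (y₁ t)) (Ici 0) t)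
    (hy₂ : ∀ t, 0 ≤ t → HasDerivWithinAt y₂ (-α (y₂ t)) (Ici 0) t) {t : ℝ} (ht : 0 ≤ t) :
    |y₁ t - y₂ t| ≤ |y₁ 0 - y₂ 0| := by
  have hderiv : ∀ t, 0 ≤ t → HasDerivWithinAt (fun t => (y₁ t - y₂ t) ^ 2)
      (2 * (y₁ t - y₂ t) * (-α (y₁ t) - -α (y₂ t))) (Ici 0) t := fun t ht =>
    (((hy₁ t ht).sub (hy₂ t ht)).pow 2).congr_deriv (by simp)
  have hanti : AntitoneOn (fun t => (y₁ t - y₂ t) ^ 2) (Ici 0) := by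
    refine antitoneOn_of_hasDerivWithinAt_nonpos (convex_Ici 0)
      (fun t ht => (hderiv t ht).continuousWithinAt)
      (fun t ht => (hderiv t (interior_subset ht)).mono interior_subset) fun t ht => ?_
    have ht₀ : 0 ≤ t := interior_subset ht
    rcases le_total (y₁ t) (y₂ t) with h | h
    · nlinarith [hα (hy₁s t ht₀) (hy₂s t ht₀) h]
    · nlinarith [hα (hy₂s t ht₀) (hy₁s t ht₀) h]
  exact sq_le_sq.1 (hanti self_mem_Ici ht ht)

theorem IsBetaFor.continuousOn {β : ℝ → ℝ → ℝ} (hβ : IsBetaFor α β)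
    (hα : MonotoneOn α (Ici 0)) :
    ContinuousOn (fun p : ℝ × ℝ => β p.1 p.2) (Ici 0 ×ˢ Ici 0) := by
  refine continuousOn_prod_of_continuousOn_lipschitzOnWith _ 1
    (fun r hr t ht => ((hβ r hr).2 t ht).2.2.continuousWithinAt)
    fun t ht => LipschitzOnWith.of_dist_le_mul fun r₁ hr₁ r₂ hr₂ => ?_
  have := abs_sub_le_initial_of_hasDerivWithinAt_neg_monotoneOn hα
    (fun t ht => ((hβ r₁ hr₁).2 t ht).1) (fun t ht => ((hβ r₂ hr₂).2 t ht).1)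
    (fun t ht => ((hβ r₁ hr₁).2 t ht).2.2) (fun t ht => ((hβ r₂ hr₂).2 t ht).2.2) ht
  simpa [Real.dist_eq, (hβ r₁ hr₁).1, (hβ r₂ hr₂).1] using this

end Decay

section Gronwall

theorem le_mul_exp_of_le_add_mul_integral {h : ℝ → ℝ} (hh : Continuous h) {a K T : ℝ}
    (hK : 0 ≤ K) (hle : ∀ t ∈ Icc 0 T, h t ≤ a + K * ∫ s in (0 : ℝ)..t, h s) :
    ∀ t ∈ Icc 0 T, h t ≤ a * Real.exp (K * t) := by
  intro t ht
  have hderiv : ∀ t, HasDerivAt (fun t => a + K * ∫ s in (0 : ℝ)..t, h s) (K * h t) t :=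
    fun t => ((hh.integral_hasStrictDerivAt 0 t).hasDerivAt.const_mul K).const_add a
  have hbound := le_gronwallBound_of_liminf_deriv_right_le (δ := a) (K := K) (ε := 0)
    (fun t _ => (hderiv t).continuousAt.continuousWithinAt)
    (fun t _ _ => (hderiv t).hasDerivWithinAt.liminf_right_slope_le)
    (by simp) (fun t ht => by simpa using
      mul_le_mul_of_nonneg_left (hle t (Ico_subset_Icc_self ht)) hK) t ht
  simpa [gronwallBound_ε0] using (hle t ht).trans hbound

end Gronwall

section Caratheodory

variable {E : Type*} [NormedAddCommGroup E]

/-- A time-dependent vector field on `[0, ∞)` satisfying Carathéodory conditions that are strong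
enough for global existence: it is Lipschitz in space uniformly in time, bounded in time at the
origin, and integrable in time along continuous curves. -/
structure IsCaratheodoryField (F : ℝ → E → E) (K C : ℝ≥0) : Prop where
  lipschitz : ∀ s, 0 ≤ s → LipschitzWith K (F s)
  norm_zero_le : ∀ s, 0 ≤ s → ‖F s 0‖ ≤ C
  intervalIntegrable : ∀ ξ : ℝ → E, Continuous ξ → ∀ a b, 0 ≤ a → 0 ≤ b →
    IntervalIntegrable (fun s => F s (ξ s)) volume a b

variable {F F' : ℝ → E → E} {K C : ℝ≥0}

theorem IsCaratheodoryField.norm_le (hF : IsCaratheodoryField F K C) {s : ℝ} (hs : 0 ≤ s) (y : E) :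
    ‖F s y‖ ≤ C + K * ‖y‖ := by
  have hlip : ‖F s y - F s 0‖ ≤ K * ‖y‖ := by simpa using (hF.lipschitz s hs).norm_sub_le y 0
  linarith [norm_le_norm_add_norm_sub' (F s y) (F s 0), hF.norm_zero_le s hs]

variable [NormedSpace ℝ E]

/-- A forward solution of `ξ' = F t ξ`, `ξ 0 = x`, in integral form. -/
structure IsIntegralSolution (F : ℝ → E → E) (x : E) (ξ : ℝ → E) : Prop where
  continuous : Continuous ξ
  eq_add_integral : ∀ t, 0 ≤ t → ξ t = x + ∫ s in (0 : ℝ)..t, F s (ξ s)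

variable {x x' : E} {ξ ξ' : ℝ → E}

namespace IsIntegralSolution

theorem apply_zero (h : IsIntegralSolution F x ξ) : ξ 0 = x := by
  simpa using h.eq_add_integral 0 le_rfl

theorem sub_eq_integral (h : IsIntegralSolution F x ξ) (hF : IsCaratheodoryField F K C)
    {s t : ℝ} (hs : 0 ≤ s) (ht : 0 ≤ t) : ξ t - ξ s = ∫ r in s..t, F r (ξ r) := by
  rw [h.eq_add_integral t ht, h.eq_add_integral s hs, add_sub_add_left_eq_sub]
  exact intervalIntegral.integral_interval_sub_left
    (hF.intervalIntegrable ξ h.continuous 0 t le_rfl ht)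
    (hF.intervalIntegrable ξ h.continuous 0 s le_rfl hs)

theorem norm_le (h : IsIntegralSolution F x ξ) (hF : IsCaratheodoryField F K C) {R t T : ℝ}
    (hx : ‖x‖ ≤ R) (ht : t ∈ Icc 0 T) : ‖ξ t‖ ≤ (R + C * T) * Real.exp (K * T) := by
  have hξ := h.continuous
  have hint : ∀ t ∈ Icc 0 T, ‖ξ t‖ ≤ (R + C * T) + K * ∫ s in (0 : ℝ)..t, ‖ξ s‖ := by
    intro t ht
    calc ‖ξ t‖ ≤ ‖x‖ + ‖∫ s in (0 : ℝ)..t, F s (ξ s)‖ :=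
          (congrArg norm (h.eq_add_integral t ht.1)).trans_le (norm_add_le _ _)
      _ ≤ ‖x‖ + ∫ s in (0 : ℝ)..t, (C + K * ‖ξ s‖) := by
          gcongr
          exact intervalIntegral.norm_integral_le_of_norm_le ht.1
            (.of_forall fun s hs => hF.norm_le hs.1.le (ξ s))
            ((by fun_prop : Continuous fun s => C + K * ‖ξ s‖).intervalIntegrable _ _)
      _ = ‖x‖ + C * t + K * ∫ s in (0 : ℝ)..t, ‖ξ s‖ := by
          rw [intervalIntegral.integral_add (by simp) ((by fun_prop :
            Continuous fun s => K * ‖ξ s‖).intervalIntegrable _ _),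
            intervalIntegral.integral_const_mul, intervalIntegral.integral_const]
          simp only [sub_zero, smul_eq_mul]
          ring
      _ ≤ (R + C * T) + K * ∫ s in (0 : ℝ)..t, ‖ξ s‖ := by gcongr; exact ht.2
  have hR : 0 ≤ R := (norm_nonneg x).trans hx
  have hT : 0 ≤ T := ht.1.trans ht.2
  refine (le_mul_exp_of_le_add_mul_integral hξ.norm K.coe_nonneg hint t ht).trans
    (by gcongr; exact ht.2)

theorem norm_sub_le_of_norm_le (h : IsIntegralSolution F x ξ) (hF : IsCaratheodoryField F K C)
    {T B : ℝ} (hB : ∀ t ∈ Icc 0 T, ‖ξ t‖ ≤ B) {s t : ℝ} (hs : s ∈ Icc 0 T) (ht : t ∈ Icc 0 T) :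
    ‖ξ t - ξ s‖ ≤ (C + K * B) * |t - s| := by
  rw [h.sub_eq_integral hF hs.1 ht.1]
  refine intervalIntegral.norm_integral_le_of_norm_le_const fun r hr => ?_
  have hrT : r ∈ Icc 0 T := uIcc_subset_Icc hs ht (uIoc_subset_uIcc hr)
  exact (hF.norm_le hrT.1 (ξ r)).trans (by gcongr; exact hB r hrT)

theorem norm_sub_le_mul_exp (h : IsIntegralSolution F x ξ) (h' : IsIntegralSolution F x' ξ')
    (hF : IsCaratheodoryField F K C) {t T : ℝ} (ht : t ∈ Icc 0 T) :
    ‖ξ t - ξ' t‖ ≤ ‖x - x'‖ * Real.exp (K * T) := by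
  have hdiff : Continuous fun s => ‖ξ s - ξ' s‖ := (h.continuous.sub h'.continuous).norm
  have hint : ∀ t ∈ Icc 0 T, ‖ξ t - ξ' t‖ ≤ ‖x - x'‖ + K * ∫ s in (0 : ℝ)..t, ‖ξ s - ξ' s‖ := by
    intro t ht
    have heq : ξ t - ξ' t = (x - x') + ∫ s in (0 : ℝ)..t, (F s (ξ s) - F s (ξ' s)) := by
      rw [intervalIntegral.integral_sub
        (hF.intervalIntegrable ξ h.continuous 0 t le_rfl ht.1)
        (hF.intervalIntegrable ξ' h'.continuous 0 t le_rfl ht.1),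
        h.eq_add_integral t ht.1, h'.eq_add_integral t ht.1]
      abel
    rw [heq, ← intervalIntegral.integral_const_mul]
    refine (norm_add_le _ _).trans ?_
    gcongr
    exact intervalIntegral.norm_integral_le_of_norm_le ht.1
      (.of_forall fun s hs => (hF.lipschitz s hs.1.le).norm_sub_le _ _)
      ((hdiff.const_mul _).intervalIntegrable _ _)
  refine (le_mul_exp_of_le_add_mul_integral hdiff K.coe_nonneg hint t ht).trans
    (by gcongr; exact ht.2)

theorem shift (h : IsIntegralSolution F x ξ) (hF : IsCaratheodoryField F K C) {s : ℝ}
    (hs : 0 ≤ s) : IsIntegralSolution (fun t => F (t + s)) (ξ s) (fun t => ξ (t + s)) where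
  continuous := h.continuous.comp (continuous_add_const s)
  eq_add_integral t ht := by
    rw [intervalIntegral.integral_comp_add_right (fun r => F r (ξ r)), zero_add,
      ← h.sub_eq_integral hF hs (add_nonneg ht hs), add_sub_cancel]

theorem concat {C' K' : ℝ≥0} (h : IsIntegralSolution F x ξ) (hF : IsCaratheodoryField F K C) {s : ℝ}
    (h' : IsIntegralSolution F' (ξ s) ξ') (hF' : IsCaratheodoryField F' K' C') (hs : 0 ≤ s) :
    IsIntegralSolution (fun t => if t ≤ s then F t else F' (t - s)) x
      (fun t => if t ≤ s then ξ t else ξ' (t - s)) where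
  continuous := by
    refine h.continuous.if_le (h'.continuous.comp (continuous_id.sub continuous_const))
      continuous_id continuous_const fun t ht => ?_
    subst ht
    simp [h'.apply_zero]
  eq_add_integral t ht := by
    set G : ℝ → E := fun r => (if r ≤ s then F r else F' (r - s))
      (if r ≤ s then ξ r else ξ' (r - s))
    have hG₁ : EqOn (fun r => F r (ξ r)) G (Iic s) := fun r hr => by simp [G, mem_Iic.1 hr]
    have hG₂ : EqOn (fun r => F' (r - s) (ξ' (r - s))) G (Ioi s) := fun r hr => by
      simp [G, not_le.2 (mem_Ioi.1 hr)]
    rcases le_or_gt t s with hts | hts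
    · rw [if_pos hts, h.eq_add_integral t ht]
      congr 1
      refine intervalIntegral.integral_congr fun r hr => hG₁ ?_
      exact ((uIcc_of_le ht).subset hr).2.trans hts
    · have hs_int : IntervalIntegrable G volume 0 s :=
        (hF.intervalIntegrable ξ h.continuous 0 s le_rfl hs).congr fun r hr =>
          hG₁ ((uIoc_of_le hs).subset hr).2
      have ht_int : IntervalIntegrable G volume s t := by
        have := (hF'.intervalIntegrable ξ' h'.continuous 0 (t - s) le_rfl
          (sub_nonneg.2 hts.le)).comp_sub_right s
        rw [zero_add, sub_add_cancel] at this
        exact this.congr fun r hr => hG₂ ((uIoc_of_le hts.le).subset hr).1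
      have hs_eq : ∫ r in (0 : ℝ)..s, G r = ∫ r in (0 : ℝ)..s, F r (ξ r) :=
        (intervalIntegral.integral_congr fun r hr => hG₁ ((uIcc_of_le hs).subset hr).2).symm
      have ht_eq : ∫ r in s..t, G r = ∫ r in (0 : ℝ)..(t - s), F' r (ξ' r) := by
        rw [← sub_self s, ← intervalIntegral.integral_comp_sub_right (fun r => F' r (ξ' r)) s]
        refine (intervalIntegral.integral_congr_ae (.of_forall fun r hr => hG₂ ?_)).symm
        exact ((uIoc_of_le hts.le).subset hr).1
      rw [if_neg hts.not_ge, ← intervalIntegral.integral_add_adjacent_intervals hs_int ht_int,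
        hs_eq, ht_eq, h'.eq_add_integral _ (sub_nonneg.2 hts.le), h.eq_add_integral s hs, add_assoc]

end IsIntegralSolution

end Caratheodory

section CaratheodoryExistence

variable {E : Type*} [NormedAddCommGroup E] [NormedSpace ℝ E]

theorem continuousOn_integral_Ici {p : ℝ → E} {a : ℝ}
    (hp : ∀ t, a ≤ t → IntervalIntegrable p volume a t) :
    ContinuousOn (fun t => ∫ s in a..t, p s) (Ici a) := by
  intro t (ht : a ≤ t)
  have hat : a ≤ t + 1 := by linarith
  have hcont : ContinuousOn (fun t => ∫ s in a..t, p s) (Icc a (t + 1)) := by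
    have := intervalIntegral.continuousOn_primitive_interval' (hp _ hat) left_mem_uIcc
    rwa [uIcc_of_le hat] at this
  refine (hcont t ⟨ht, by linarith⟩).mono_of_mem_nhdsWithin ?_
  exact inter_mem_nhdsWithin _ (Iic_mem_nhds (by linarith))

theorem norm_exp_neg_smul_integral_le {p : ℝ → E} {L b t : ℝ} (hL : 0 < L) (hb : 0 ≤ b)
    (ht : 0 ≤ t) (hp : ∀ s ∈ Ioc 0 t, ‖p s‖ ≤ b * Real.exp (L * s)) :
    ‖Real.exp (-(L * t)) • ∫ s in (0 : ℝ)..t, p s‖ ≤ b / L := by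
  have hexp : ∫ s in (0 : ℝ)..t, b * Real.exp (L * s) = b * (L⁻¹ * (Real.exp (L * t) - 1)) := by
    simp [intervalIntegral.integral_const_mul,
      intervalIntegral.integral_comp_mul_left Real.exp hL.ne']
  calc ‖Real.exp (-(L * t)) • ∫ s in (0 : ℝ)..t, p s‖
      ≤ Real.exp (-(L * t)) * (b * (L⁻¹ * (Real.exp (L * t) - 1))) := by
        rw [norm_smul, Real.norm_eq_abs, Real.abs_exp, ← hexp]
        gcongr
        exact intervalIntegral.norm_integral_le_of_norm_le ht (.of_forall hp)
          ((by fun_prop : Continuous fun s => b * Real.exp (L * s)).intervalIntegrable _ _)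
    _ = b / L * (1 - Real.exp (-(L * t))) := by
        rw [Real.exp_neg]
        field_simp
    _ ≤ b / L := mul_le_of_le_one_right (by positivity) (by linarith [Real.exp_pos (-(L * t))])

variable {F : ℝ → E → E} {K C : ℝ≥0}

/-- The curve `t ↦ e^{L t} ζ t` encoded by a bounded continuous function `ζ` on `[0, ∞)`. The sup
norm of `ζ` is the Bielecki norm of the curve, for which the Picard map is a contraction on the
whole half line. -/
def unweight (L : ℝ) (ζ : ℝ≥0 →ᵇ E) (t : ℝ) : E :=
  Real.exp (L * t) • ζ t.toNNReal

theorem continuous_unweight (L : ℝ) (ζ : ℝ≥0 →ᵇ E) : Continuous (unweight L ζ) :=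
  (by fun_prop : Continuous fun t : ℝ => Real.exp (L * t)).smul
    (ζ.continuous.comp continuous_real_toNNReal)

theorem norm_unweight_le (L : ℝ) (ζ : ℝ≥0 →ᵇ E) (t : ℝ) :
    ‖unweight L ζ t‖ ≤ Real.exp (L * t) * ‖ζ‖ := by
  rw [unweight, norm_smul, Real.norm_eq_abs, Real.abs_exp]
  gcongr
  exact ζ.norm_coe_le_norm _

theorem norm_unweight_sub_le (L : ℝ) (ζ ζ' : ℝ≥0 →ᵇ E) (t : ℝ) :
    ‖unweight L ζ t - unweight L ζ' t‖ ≤ Real.exp (L * t) * dist ζ ζ' := by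
  rw [dist_eq_norm, unweight, unweight, ← smul_sub]
  exact norm_unweight_le L (ζ - ζ') t

namespace IsCaratheodoryField

theorem norm_weighted_picard_le (hF : IsCaratheodoryField F K C) {L : ℝ} (hL : 0 < L) (x : E)
    (ζ : ℝ≥0 →ᵇ E) (t : ℝ≥0) :
    ‖Real.exp (-(L * t)) • (x + ∫ s in (0 : ℝ)..t, F s (unweight L ζ s))‖ ≤
      ‖x‖ + (C + K * ‖ζ‖) / L := by
  rw [smul_add]
  refine (norm_add_le _ _).trans (add_le_add ?_ ?_)
  · rw [norm_smul, Real.norm_eq_abs, Real.abs_exp]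
    have : Real.exp (-(L * t)) ≤ 1 := Real.exp_le_one_iff.2 (neg_nonpos.2 (by positivity))
    exact mul_le_of_le_one_left (norm_nonneg x) this
  · refine norm_exp_neg_smul_integral_le hL (by positivity) t.2 fun s hs => ?_
    calc ‖F s (unweight L ζ s)‖ ≤ C + K * ‖unweight L ζ s‖ := hF.norm_le hs.1.le _
      _ ≤ C * Real.exp (L * s) + K * (Real.exp (L * s) * ‖ζ‖) := by
          gcongr
          · exact le_mul_of_one_le_right C.2 (Real.one_le_exp (mul_nonneg hL.le hs.1.le))
          · exact norm_unweight_le L ζ s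
      _ = (C + K * ‖ζ‖) * Real.exp (L * s) := by ring

/-- The Picard map `ξ ↦ (t ↦ x + ∫₀ᵗ F s (ξ s))`, conjugated by `unweight L`. -/
def weightedPicard (hF : IsCaratheodoryField F K C) {L : ℝ} (hL : 0 < L) (x : E)
    (ζ : ℝ≥0 →ᵇ E) : ℝ≥0 →ᵇ E :=
  BoundedContinuousFunction.ofNormedAddCommGroup
    (fun t => Real.exp (-(L * t)) • (x + ∫ s in (0 : ℝ)..t, F s (unweight L ζ s)))
    ((by fun_prop : Continuous fun t : ℝ≥0 => Real.exp (-(L * t))).smul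
      (continuous_const.add ((continuousOn_integral_Ici fun t ht =>
        hF.intervalIntegrable _ (continuous_unweight L ζ) 0 t le_rfl ht).comp_continuous
          NNReal.continuous_coe fun t => t.2)))
    (‖x‖ + (C + K * ‖ζ‖) / L) (hF.norm_weighted_picard_le hL x ζ)

theorem dist_weightedPicard_le (hF : IsCaratheodoryField F K C) {L : ℝ} (hL : 0 < L) (x : E)
    (ζ ζ' : ℝ≥0 →ᵇ E) :
    dist (hF.weightedPicard hL x ζ) (hF.weightedPicard hL x ζ') ≤ K / L * dist ζ ζ' := by
  refine (BoundedContinuousFunction.dist_le (by positivity)).2 fun t => ?_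
  have hint := fun ζ : ℝ≥0 →ᵇ E =>
    hF.intervalIntegrable _ (continuous_unweight L ζ) 0 t le_rfl t.2
  have hdiff : hF.weightedPicard hL x ζ t - hF.weightedPicard hL x ζ' t =
      Real.exp (-(L * t)) •
        ∫ s in (0 : ℝ)..t, (F s (unweight L ζ s) - F s (unweight L ζ' s)) := by
    rw [intervalIntegral.integral_sub (hint ζ) (hint ζ')]
    simp [weightedPicard, ← smul_sub]
  rw [dist_eq_norm, hdiff, div_mul_eq_mul_div]
  refine norm_exp_neg_smul_integral_le hL (by positivity) t.2 fun s hs => ?_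
  calc ‖F s (unweight L ζ s) - F s (unweight L ζ' s)‖
      ≤ K * (Real.exp (L * s) * dist ζ ζ') := ((hF.lipschitz s hs.1.le).norm_sub_le _ _).trans
        (by gcongr; exact norm_unweight_sub_le L ζ ζ' s)
    _ = K * dist ζ ζ' * Real.exp (L * s) := by ring

theorem exists_isIntegralSolution [CompleteSpace E] (hF : IsCaratheodoryField F K C) (x : E) :
    ∃ ξ, IsIntegralSolution F x ξ := by
  have hL : (0 : ℝ) < K + 1 := by positivity
  have hcontr : ContractingWith (K / (K + 1)) (hF.weightedPicard hL x) :=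
    ⟨(div_lt_one (by positivity)).2 (lt_add_one K),
      LipschitzWith.of_dist_le_mul fun ζ ζ' => by
        simpa using hF.dist_weightedPicard_le hL x ζ ζ'⟩
  obtain ⟨ζ, hζ⟩ : ∃ ζ, hF.weightedPicard hL x ζ = ζ :=
    ⟨_, hcontr.fixedPoint_isFixedPt⟩
  refine ⟨unweight (K + 1) ζ, continuous_unweight _ ζ, fun t ht => ?_⟩
  have hζt := congrArg (fun ζ : ℝ≥0 →ᵇ E => ζ t.toNNReal) hζ
  simp only [weightedPicard, BoundedContinuousFunction.coe_ofNormedAddCommGroup,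
    Real.coe_toNNReal t ht] at hζt
  rw [unweight, ← hζt, smul_smul, ← Real.exp_add, add_neg_cancel, Real.exp_zero, one_smul]

end IsCaratheodoryField

end CaratheodoryExistence

section ControlSystem

variable {E V : Type*} [NormedAddCommGroup E]

/-- Standing assumptions on the dynamics `ξ' = f ξ u`, `u ∈ U`: `f` is continuous in the control,
Lipschitz in the state uniformly in the control, and bounded over the controls at the origin. -/
structure IsLipschitzControlSystem [TopologicalSpace V] (f : E → V → E) (U : Set V) (K C : ℝ≥0) :
    Prop where
  nonempty : U.Nonempty
  continuousOn : ∀ x, ContinuousOn (f x) U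
  lipschitz : ∀ u ∈ U, LipschitzWith K (fun x => f x u)
  norm_zero_le : ∀ u ∈ U, ‖f 0 u‖ ≤ C

/-- `ξ` is the forward trajectory from `x` of the dynamics `f` under the measurable `U`-valued
control signal `u`. -/
structure IsControlledTrajectory [NormedSpace ℝ E] [MeasurableSpace V] (f : E → V → E) (U : Set V)
    (x : E) (u : ℝ → V) (ξ : ℝ → E) : Prop where
  measurable : Measurable u
  control_mem : ∀ t, 0 ≤ t → u t ∈ U
  isIntegralSolution : IsIntegralSolution (fun s y => f y (u s)) x ξ

variable {f : E → V → E} {U : Set V} {K C : ℝ≥0} {x : E} {u u' : ℝ → V} {ξ ξ' : ℝ → E}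

theorem IsControlledTrajectory.apply_zero [NormedSpace ℝ E] [MeasurableSpace V]
    (h : IsControlledTrajectory f U x u ξ) : ξ 0 = x :=
  h.isIntegralSolution.apply_zero

variable [TopologicalSpace V]

namespace IsLipschitzControlSystem

theorem norm_le (hf : IsLipschitzControlSystem f U K C) {v : V} (hv : v ∈ U) (x : E) :
    ‖f x v‖ ≤ C + K * ‖x‖ := by
  have hlip : ‖f x v - f 0 v‖ ≤ K * ‖x‖ := by simpa using (hf.lipschitz v hv).norm_sub_le x 0
  linarith [norm_le_norm_add_norm_sub' (f x v) (f 0 v), hf.norm_zero_le v hv]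

variable [MeasurableSpace V] [OpensMeasurableSpace V]

theorem aestronglyMeasurable [SecondCountableTopology E] (hf : IsLipschitzControlSystem f U K C)
    (hu : Measurable u) (huU : ∀ t, 0 ≤ t → u t ∈ U) (hξ : Continuous ξ) :
    AEStronglyMeasurable (fun s => f (ξ s) (u s)) (volume.restrict (Ici 0)) := by
  borelize E
  have hcont : ContinuousOn (fun p : E × V => f p.1 p.2) (univ ×ˢ U) :=
    continuousOn_prod_of_continuousOn_lipschitzOnWith _ K (fun x _ => hf.continuousOn x)
      fun v hv => (hf.lipschitz v hv).lipschitzOnWith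
  have hmeas : Measurable fun s : Ici (0 : ℝ) => f (ξ s) (u s) :=
    (continuousOn_iff_continuous_domRestrict.1 hcont).measurable.comp
      (((hξ.measurable.prodMk hu).comp measurable_subtype_coe).subtype_mk
        (h := fun s => ⟨mem_univ _, huU s s.2⟩))
  exact (aemeasurable_restrict_of_measurable_subtype measurableSet_Ici hmeas).aestronglyMeasurable

theorem isCaratheodoryField [SecondCountableTopology E] (hf : IsLipschitzControlSystem f U K C)
    (hu : Measurable u) (huU : ∀ t, 0 ≤ t → u t ∈ U) :
    IsCaratheodoryField (fun s y => f y (u s)) K C where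
  lipschitz s hs := hf.lipschitz (u s) (huU s hs)
  norm_zero_le s hs := hf.norm_zero_le (u s) (huU s hs)
  intervalIntegrable ξ hξ a b ha hb := by
    have hsub : uIoc a b ⊆ Ici 0 := fun s hs => (le_min ha hb).trans hs.1.le
    refine ((by fun_prop : Continuous fun s => C + K * ‖ξ s‖).intervalIntegrable a b).mono_fun
      ((hf.aestronglyMeasurable hu huU hξ).mono_measure (Measure.restrict_mono hsub le_rfl)) ?_
    refine (ae_restrict_iff' measurableSet_uIoc).2 (.of_forall fun s hs => ?_)
    exact (hf.norm_le (huU s (hsub hs)) (ξ s)).trans (le_abs_self _)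

theorem exists_isControlledTrajectory [NormedSpace ℝ E] [SecondCountableTopology E]
    [CompleteSpace E] (hf : IsLipschitzControlSystem f U K C) (hu : Measurable u)
    (huU : ∀ t, 0 ≤ t → u t ∈ U) (x : E) : ∃ ξ, IsControlledTrajectory f U x u ξ :=
  let ⟨ξ, hξ⟩ := (hf.isCaratheodoryField hu huU).exists_isIntegralSolution x
  ⟨ξ, hu, huU, hξ⟩

end IsLipschitzControlSystem

namespace IsControlledTrajectory

variable [NormedSpace ℝ E] [SecondCountableTopology E] [MeasurableSpace V] [OpensMeasurableSpace V]

theorem shift (h : IsControlledTrajectory f U x u ξ) (hf : IsLipschitzControlSystem f U K C)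
    {s : ℝ} (hs : 0 ≤ s) :
    IsControlledTrajectory f U (ξ s) (fun t => u (t + s)) (fun t => ξ (t + s)) where
  measurable := h.measurable.comp (measurable_id.add_const s)
  control_mem _ ht := h.control_mem _ (add_nonneg ht hs)
  isIntegralSolution :=
    h.isIntegralSolution.shift (hf.isCaratheodoryField h.measurable h.control_mem) hs

theorem concat (h : IsControlledTrajectory f U x u ξ) (hf : IsLipschitzControlSystem f U K C)
    {s : ℝ} (h' : IsControlledTrajectory f U (ξ s) u' ξ') (hs : 0 ≤ s) :
    IsControlledTrajectory f U x (fun t => if t ≤ s then u t else u' (t - s))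
      (fun t => if t ≤ s then ξ t else ξ' (t - s)) where
  measurable :=
    h.measurable.ite measurableSet_Iic (h'.measurable.comp (measurable_id.sub_const s))
  control_mem _ ht := by
    split_ifs with hts
    exacts [h.control_mem _ ht, h'.control_mem _ (sub_nonneg.2 (le_of_not_ge hts))]
  isIntegralSolution := by
    convert! h.isIntegralSolution.concat (hf.isCaratheodoryField h.measurable h.control_mem)
      h'.isIntegralSolution (hf.isCaratheodoryField h'.measurable h'.control_mem) hs using 2
    split_ifs <;> rfl

theorem norm_sub_le_mul (h : IsControlledTrajectory f U x u ξ)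
    (hf : IsLipschitzControlSystem f U K C) {R s t T : ℝ} (hx : ‖x‖ ≤ R) (hs : s ∈ Icc 0 T)
    (ht : t ∈ Icc 0 T) : ‖ξ t - ξ s‖ ≤ (C + K * ((R + C * T) * Real.exp (K * T))) * |t - s| :=
  have hF := hf.isCaratheodoryField h.measurable h.control_mem
  h.isIntegralSolution.norm_sub_le_of_norm_le hF
    (fun _ ht => h.isIntegralSolution.norm_le hF hx ht) hs ht

end IsControlledTrajectory

end ControlSystem

section ObstacleValue

variable {E V : Type*}

/-- The minimum over `t ∈ [0, T]` of the obstacle `ψ` along `t ↦ (ξ t, T - t)`; the second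
coordinate of `ψ` is the time to go. -/
def obstaclePayoff (ψ : E × ℝ → ℝ) (ξ : ℝ → E) (T : ℝ) : ℝ :=
  sInf ((fun t => ψ (ξ t, T - t)) '' Icc 0 T)

variable {ψ : E × ℝ → ℝ} {ξ : ℝ → E} {c t T : ℝ}

theorem le_obstaclePayoff (hT : 0 ≤ T) (h : ∀ t ∈ Icc 0 T, c ≤ ψ (ξ t, T - t)) :
    c ≤ obstaclePayoff ψ ξ T :=
  le_csInf ((nonempty_Icc.2 hT).image _) (forall_mem_image.2 h)

variable [NormedAddCommGroup E]

theorem obstaclePayoff_le (hψ : ContinuousOn ψ {p | 0 ≤ p.2}) (hξ : Continuous ξ)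
    (ht : t ∈ Icc 0 T) : obstaclePayoff ψ ξ T ≤ ψ (ξ t, T - t) := by
  have hcont : ContinuousOn (fun t => ψ (ξ t, T - t)) (Icc 0 T) :=
    hψ.comp (by fun_prop) fun t ht => sub_nonneg.2 ht.2
  exact csInf_le (isCompact_Icc.image_of_continuousOn hcont).bddBelow (mem_image_of_mem _ ht)

variable [NormedSpace ℝ E] [MeasurableSpace V]

/-- The value of the control problem of maximizing `obstaclePayoff ψ ξ T` over the controlled
trajectories `ξ` from `x`. -/
def obstacleValue (f : E → V → E) (U : Set V) (ψ : E × ℝ → ℝ) (x : E) (T : ℝ) : ℝ :=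
  sSup {y | ∃ u ξ, IsControlledTrajectory f U x u ξ ∧ y = obstaclePayoff ψ ξ T}

variable {f : E → V → E} {U : Set V} {K C : ℝ≥0} {x : E} {u : ℝ → V}

theorem IsControlledTrajectory.obstaclePayoff_le_obstacleValue
    (h : IsControlledTrajectory f U x u ξ) (hψ : ContinuousOn ψ {p | 0 ≤ p.2}) (hT : 0 ≤ T) :
    obstaclePayoff ψ ξ T ≤ obstacleValue f U ψ x T := by
  refine le_csSup ⟨ψ (x, T), ?_⟩ ⟨u, ξ, h, rfl⟩
  rintro _ ⟨u, ξ, hξ, rfl⟩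
  simpa [hξ.apply_zero] using
    obstaclePayoff_le hψ hξ.isIntegralSolution.continuous (left_mem_Icc.2 hT)

variable [TopologicalSpace V] [OpensMeasurableSpace V] [ProperSpace E]

namespace IsLipschitzControlSystem

theorem nonempty_setOf_obstaclePayoff (hf : IsLipschitzControlSystem f U K C) :
    {y | ∃ u ξ, IsControlledTrajectory f U x u ξ ∧ y = obstaclePayoff ψ ξ T}.Nonempty :=
  let ⟨_, hv⟩ := hf.nonempty
  let ⟨ξ, hξ⟩ := hf.exists_isControlledTrajectory measurable_const (fun _ _ => hv) x
  ⟨_, _, ξ, hξ, rfl⟩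

theorem obstacleValue_le (hf : IsLipschitzControlSystem f U K C)
    (h : ∀ u ξ, IsControlledTrajectory f U x u ξ → obstaclePayoff ψ ξ T ≤ c) :
    obstacleValue f U ψ x T ≤ c :=
  csSup_le hf.nonempty_setOf_obstaclePayoff fun _ ⟨u, ξ, hξ, hy⟩ => hy ▸ h u ξ hξ

theorem exists_lt_obstaclePayoff (hf : IsLipschitzControlSystem f U K C)
    (h : c < obstacleValue f U ψ x T) :
    ∃ u ξ, IsControlledTrajectory f U x u ξ ∧ c < obstaclePayoff ψ ξ T := by
  obtain ⟨_, ⟨u, ξ, hξ, rfl⟩, hc⟩ := exists_lt_of_lt_csSup hf.nonempty_setOf_obstaclePayoff h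
  exact ⟨u, ξ, hξ, hc⟩

theorem obstacleValue_le_obstacle (hf : IsLipschitzControlSystem f U K C)
    (hψ : ContinuousOn ψ {p | 0 ≤ p.2}) (hT : 0 ≤ T) (x : E) :
    obstacleValue f U ψ x T ≤ ψ (x, T) :=
  hf.obstacleValue_le fun u ξ hξ => by
    simpa [hξ.apply_zero] using
      obstaclePayoff_le hψ hξ.isIntegralSolution.continuous (left_mem_Icc.2 hT)

theorem obstacleValue_zero (hf : IsLipschitzControlSystem f U K C)
    (hψ : ContinuousOn ψ {p | 0 ≤ p.2}) (x : E) : obstacleValue f U ψ x 0 = ψ (x, 0) := by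
  obtain ⟨v, hv⟩ := hf.nonempty
  obtain ⟨ξ, hξ⟩ := hf.exists_isControlledTrajectory measurable_const (fun _ _ => hv) x
  refine (hf.obstacleValue_le_obstacle hψ le_rfl x).antisymm
    (le_trans ?_ (hξ.obstaclePayoff_le_obstacleValue hψ le_rfl))
  simp [obstaclePayoff, hξ.apply_zero]

theorem obstaclePayoff_le_obstacleValue_shift (hf : IsLipschitzControlSystem f U K C)
    (hψ : ContinuousOn ψ {p | 0 ≤ p.2}) (hξ : IsControlledTrajectory f U x u ξ)
    (ht : t ∈ Icc 0 T) : obstaclePayoff ψ ξ T ≤ obstacleValue f U ψ (ξ t) (T - t) := by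
  have hT : 0 ≤ T - t := sub_nonneg.2 ht.2
  refine le_trans (le_obstaclePayoff hT fun s hs => ?_)
    ((hξ.shift hf ht.1).obstaclePayoff_le_obstacleValue hψ hT)
  have hst : s + t ∈ Icc 0 T := ⟨add_nonneg hs.1 ht.1, le_sub_iff_add_le.1 hs.2⟩
  simpa [sub_sub, add_comm t] using obstaclePayoff_le hψ hξ.isIntegralSolution.continuous hst

theorem le_obstacleValue_of_forall_le (hf : IsLipschitzControlSystem f U K C)
    (hψ : ContinuousOn ψ {p | 0 ≤ p.2}) (hξ : IsControlledTrajectory f U x u ξ)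
    (ht : t ∈ Icc 0 T) (hcψ : ∀ s ∈ Icc 0 t, c ≤ ψ (ξ s, T - s))
    (hc : c ≤ obstacleValue f U ψ (ξ t) (T - t)) : c ≤ obstacleValue f U ψ x T := by
  refine le_of_forall_lt fun b hb => ?_
  obtain ⟨u', ξ', hξ', hb'⟩ := hf.exists_lt_obstaclePayoff (hb.trans_le hc)
  obtain ⟨c', hbc', hc'⟩ := exists_between (lt_min hb hb')
  refine hbc'.trans_le <| (le_obstaclePayoff (ht.1.trans ht.2) fun s hs => ?_).trans
    ((hξ.concat hf hξ' ht.1).obstaclePayoff_le_obstacleValue hψ (ht.1.trans ht.2))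
  by_cases hst : s ≤ t
  · simpa only [if_pos hst] using (hc'.le.trans (min_le_left _ _)).trans (hcψ s ⟨hs.1, hst⟩)
  · have hmem : s - t ∈ Icc 0 (T - t) :=
      ⟨sub_nonneg.2 (le_of_not_ge hst), sub_le_sub_right hs.2 t⟩
    have hle := obstaclePayoff_le hψ hξ'.isIntegralSolution.continuous hmem
    rw [sub_sub_sub_cancel_right] at hle
    simpa only [if_neg hst] using (hc'.le.trans (min_le_right _ _)).trans hle

end IsLipschitzControlSystem

end ObstacleValue

section ObstacleValueContinuity

variable {E V : Type*} [NormedAddCommGroup E] [NormedSpace ℝ E] [ProperSpace E]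
  [TopologicalSpace V] [MeasurableSpace V] [OpensMeasurableSpace V] {f : E → V → E} {U : Set V}
  {K C : ℝ≥0} {x x' : E} {u : ℝ → V} {ξ ξ' : ℝ → E} {ψ : E × ℝ → ℝ} {R T T' T₁ : ℝ}

theorem abs_sub_min_le {t' : ℝ} (ht' : t' ≤ T') :
    |t' - min t' T| ≤ |T' - T| ∧ |(T' - t') - (T - min t' T)| ≤ |T' - T| := by
  rcases le_total t' T with h | h
  · simp [h]
  · rw [min_eq_right h, sub_self, sub_zero, abs_of_nonneg (sub_nonneg.2 h),
      abs_of_nonneg (sub_nonneg.2 ht'), abs_of_nonneg (sub_nonneg.2 (h.trans ht'))]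
    exact ⟨sub_le_sub_right ht' T, sub_le_sub_left h T'⟩

namespace IsControlledTrajectory

theorem prod_mem (hf : IsLipschitzControlSystem f U K C) (h : IsControlledTrajectory f U x u ξ)
    (hx : ‖x‖ ≤ R) (hT : T ∈ Icc 0 T₁) {t : ℝ} (ht : t ∈ Icc 0 T) :
    (ξ t, T - t) ∈ Metric.closedBall 0 ((R + C * T₁) * Real.exp (K * T₁)) ×ˢ Icc 0 T₁ :=
  ⟨mem_closedBall_zero_iff.2 (h.isIntegralSolution.norm_le
    (hf.isCaratheodoryField h.measurable h.control_mem) hx ⟨ht.1, ht.2.trans hT.2⟩),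
    sub_nonneg.2 ht.2, (sub_le_self T ht.1).trans hT.2⟩

theorem exists_dist_le (hf : IsLipschitzControlSystem f U K C)
    (h : IsControlledTrajectory f U x u ξ) (h' : IsControlledTrajectory f U x' u ξ')
    (hx : ‖x‖ ≤ R) (hT : T ∈ Icc 0 T₁) (hT' : T' ∈ Icc 0 T₁) {t' : ℝ} (ht' : t' ∈ Icc 0 T') :
    ∃ t ∈ Icc 0 T, dist (ξ' t', T' - t') (ξ t, T - t) ≤
      (Real.exp (K * T₁) + (C + K * ((R + C * T₁) * Real.exp (K * T₁))) + 1) *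
        dist (x', T') (x, T) := by
  set M : ℝ := C + K * ((R + C * T₁) * Real.exp (K * T₁))
  have hR : 0 ≤ R := (norm_nonneg x).trans hx
  have hT₁ : 0 ≤ T₁ := hT.1.trans hT.2
  have ht'₁ : t' ∈ Icc 0 T₁ := ⟨ht'.1, ht'.2.trans hT'.2⟩
  have ht : min t' T ∈ Icc 0 T := ⟨le_min ht'.1 hT.1, min_le_right _ _⟩
  have hspace : ‖x' - x‖ ≤ dist (x', T') (x, T) := by
    rw [← dist_eq_norm]; exact le_max_left _ _
  have htime : |T' - T| ≤ dist (x', T') (x, T) := le_max_right _ _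
  obtain ⟨htime₁, htime₂⟩ := abs_sub_min_le (T := T) ht'.2
  have hsame : ‖ξ' t' - ξ t'‖ ≤ ‖x' - x‖ * Real.exp (K * T₁) :=
    h'.isIntegralSolution.norm_sub_le_mul_exp h.isIntegralSolution
      (hf.isCaratheodoryField h.measurable h.control_mem) ht'₁
  have hspeed : ‖ξ t' - ξ (min t' T)‖ ≤ M * |t' - min t' T| :=
    h.norm_sub_le_mul hf hx ⟨ht.1, ht.2.trans hT.2⟩ ht'₁
  refine ⟨min t' T, ht, max_le ?_ ?_⟩
  · calc dist (ξ' t') (ξ (min t' T)) ≤ ‖ξ' t' - ξ t'‖ + ‖ξ t' - ξ (min t' T)‖ := by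
          simpa only [dist_eq_norm] using dist_triangle (ξ' t') (ξ t') (ξ (min t' T))
      _ ≤ dist (x', T') (x, T) * Real.exp (K * T₁) + M * dist (x', T') (x, T) := by
          gcongr
          · exact hsame.trans (by gcongr)
          · exact hspeed.trans (by gcongr; exact htime₁.trans htime)
      _ ≤ (Real.exp (K * T₁) + M + 1) * dist (x', T') (x, T) := by
          linarith [dist_nonneg (x := (x', T')) (y := (x, T))]
  · have hone : 1 ≤ Real.exp (K * T₁) + M + 1 := le_add_of_nonneg_left (by positivity)
    exact (htime₂.trans htime).trans (le_mul_of_one_le_left dist_nonneg hone)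

end IsControlledTrajectory

namespace IsLipschitzControlSystem

theorem uniformContinuousOn_obstacleValue (hf : IsLipschitzControlSystem f U K C)
    (hψ : ContinuousOn ψ {p | 0 ≤ p.2}) (hR : 0 ≤ R) (hT₁ : 0 ≤ T₁) :
    UniformContinuousOn (fun p : E × ℝ => obstacleValue f U ψ p.1 p.2)
      (Metric.closedBall 0 R ×ˢ Icc 0 T₁) := by
  set B : ℝ := (R + C * T₁) * Real.exp (K * T₁)
  set L : ℝ := Real.exp (K * T₁) + (C + K * B) + 1
  have hL : 0 < L := by positivity
  have hψ_unif : UniformContinuousOn ψ (Metric.closedBall 0 B ×ˢ Icc 0 T₁) :=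
    ((isCompact_closedBall 0 B).prod isCompact_Icc).uniformContinuousOn_of_continuous
      (hψ.mono fun p hp => hp.2.1)
  rw [Metric.uniformContinuousOn_iff] at hψ_unif ⊢
  intro ε hε
  obtain ⟨δ, hδ, hψδ⟩ := hψ_unif (ε / 2) (half_pos hε)
  have hle : ∀ p ∈ Metric.closedBall (0 : E) R ×ˢ Icc 0 T₁,
      ∀ q ∈ Metric.closedBall (0 : E) R ×ˢ Icc 0 T₁, dist q p < δ / L →
      obstacleValue f U ψ p.1 p.2 ≤ obstacleValue f U ψ q.1 q.2 + ε / 2 := by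
    rintro ⟨x, T⟩ ⟨hx, hT⟩ ⟨x', T'⟩ ⟨hx', hT'⟩ hdist
    rw [mem_closedBall_zero_iff] at hx hx'
    refine hf.obstacleValue_le fun u ξ hξ => ?_
    obtain ⟨ξ', hξ'⟩ := hf.exists_isControlledTrajectory hξ.measurable hξ.control_mem x'
    refine sub_le_iff_le_add.1 ((le_obstaclePayoff hT'.1 fun t' ht' => ?_).trans
      (hξ'.obstaclePayoff_le_obstacleValue hψ hT'.1))
    obtain ⟨t, ht, htt'⟩ := hξ.exists_dist_le hf hξ' hx hT hT' ht'
    have hclose := hψδ _ (hξ'.prod_mem hf hx' hT' ht') _ (hξ.prod_mem hf hx hT ht)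
      (htt'.trans_lt ((lt_div_iff₀' hL).1 hdist))
    have := obstaclePayoff_le hψ hξ.isIntegralSolution.continuous ht
    linarith [(abs_lt.1 (Real.dist_eq _ _ ▸ hclose)).1]
  refine ⟨δ / L, by positivity, fun p hp q hq hdist => ?_⟩
  have hpq := hle p hp q hq (by rwa [dist_comm])
  have hqp := hle q hq p hp hdist
  rw [Real.dist_eq, abs_lt]
  constructor <;> linarith

theorem continuousOn_obstacleValue (hf : IsLipschitzControlSystem f U K C)
    (hψ : ContinuousOn ψ {p | 0 ≤ p.2}) :
    ContinuousOn (fun p : E × ℝ => obstacleValue f U ψ p.1 p.2) {p | 0 ≤ p.2} := by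
  intro p (hp : 0 ≤ p.2)
  have hcont := (hf.uniformContinuousOn_obstacleValue hψ (R := ‖p.1‖ + 1) (T₁ := p.2 + 1)
    (by positivity) (by positivity)).continuousOn
  refine (hcont p ⟨by simp, hp, by simp⟩).mono_of_mem_nhdsWithin ?_
  have hnhds : Metric.closedBall 0 (‖p.1‖ + 1) ×ˢ Iic (p.2 + 1) ∈ 𝓝 p :=
    prod_mem_nhds (Metric.closedBall_mem_nhds_of_mem (by simp)) (Iic_mem_nhds (lt_add_one p.2))
  filter_upwards [self_mem_nhdsWithin, nhdsWithin_le_nhds hnhds] with q hq hq'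
  exact ⟨hq'.1, hq, hq'.2⟩

end IsLipschitzControlSystem

end ObstacleValueContinuity

section Hamiltonian

variable {E V : Type*} [NormedAddCommGroup E] [NormedSpace ℝ E]

/-- The Hamiltonian `H(x, ℓ) = sup_{v ∈ U} ℓ (f x v)`; the costate `ℓ` is a linear functional. -/
def hamiltonian (f : E → V → E) (U : Set V) (x : E) (ℓ : E →L[ℝ] ℝ) : ℝ :=
  sSup ((fun v => ℓ (f x v)) '' U)

variable [TopologicalSpace V] {f : E → V → E} {U : Set V} {K C : ℝ≥0} {x : E} {u : ℝ → V}
  {ξ : ℝ → E}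

namespace IsLipschitzControlSystem

theorem apply_le_hamiltonian (hf : IsLipschitzControlSystem f U K C) {v : V} (hv : v ∈ U) (x : E)
    (ℓ : E →L[ℝ] ℝ) : ℓ (f x v) ≤ hamiltonian f U x ℓ := by
  refine le_csSup ⟨‖ℓ‖ * (C + K * ‖x‖), forall_mem_image.2 fun v hv => ?_⟩ (mem_image_of_mem _ hv)
  exact (le_abs_self _).trans (ℓ.le_opNorm_of_le (hf.norm_le hv x))

theorem hamiltonian_le (hf : IsLipschitzControlSystem f U K C) {ℓ : E →L[ℝ] ℝ} {c : ℝ}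
    (h : ∀ v ∈ U, ℓ (f x v) ≤ c) : hamiltonian f U x ℓ ≤ c :=
  csSup_le (hf.nonempty.image _) (forall_mem_image.2 h)

end IsLipschitzControlSystem

variable [MeasurableSpace V] [ProperSpace E]

theorem IsControlledTrajectory.hasDerivWithinAt_zero {v : V}
    (hξ : IsControlledTrajectory f U x (fun _ => v) ξ) (hf : IsLipschitzControlSystem f U K C) :
    HasDerivWithinAt ξ (f x v) (Ici 0) 0 := by
  have hv : v ∈ U := hξ.control_mem 0 le_rfl
  have hcont : Continuous fun s => f (ξ s) v :=
    (hf.lipschitz v hv).continuous.comp hξ.isIntegralSolution.continuous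
  have hderiv := (hcont.integral_hasStrictDerivAt 0 0).hasDerivAt.hasDerivWithinAt (s := Ici 0)
  rw [hξ.apply_zero] at hderiv
  exact (hderiv.const_add x).congr (fun t ht => hξ.isIntegralSolution.eq_add_integral t ht)
    (hξ.isIntegralSolution.eq_add_integral 0 le_rfl)

variable [OpensMeasurableSpace V]

theorem IsControlledTrajectory.apply_sub_le (hξ : IsControlledTrajectory f U x u ξ)
    (hf : IsLipschitzControlSystem f U K C) {M h : ℝ} (hM : 0 ≤ M) (hh : 0 ≤ h)
    (hspeed : ∀ s ∈ Icc 0 h, ‖ξ s - x‖ ≤ M * s) (ℓ : E →L[ℝ] ℝ) :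
    ℓ (ξ h - x) ≤ h * (hamiltonian f U x ℓ + ‖ℓ‖ * (K * (M * h))) := by
  have hF := hf.isCaratheodoryField hξ.measurable hξ.control_mem
  have hint := hF.intervalIntegrable ξ hξ.isIntegralSolution.continuous 0 h le_rfl hh
  have hrate : ∀ s ∈ Icc 0 h,
      ℓ (f (ξ s) (u s)) ≤ hamiltonian f U x ℓ + ‖ℓ‖ * (K * (M * h)) := by
    intro s hs
    have hu := hξ.control_mem s hs.1
    have hdiff : ‖f (ξ s) (u s) - f x (u s)‖ ≤ K * (M * h) :=
      ((hf.lipschitz _ hu).norm_sub_le _ _).trans <| by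
        gcongr
        exact (hspeed s hs).trans (by gcongr; exact hs.2)
    have hℓ := (le_abs_self _).trans (ℓ.le_opNorm_of_le hdiff)
    rw [map_sub] at hℓ
    linarith [hf.apply_le_hamiltonian hu x ℓ]
  calc ℓ (ξ h - x) = ∫ s in (0 : ℝ)..h, ℓ (f (ξ s) (u s)) := by
        rw [hξ.isIntegralSolution.eq_add_integral h hh, add_sub_cancel_left,
          ℓ.intervalIntegral_comp_comm hint]
    _ ≤ ∫ _ in (0 : ℝ)..h, (hamiltonian f U x ℓ + ‖ℓ‖ * (K * (M * h))) :=
        intervalIntegral.integral_mono_on hh ⟨ℓ.integrable_comp hint.1, ℓ.integrable_comp hint.2⟩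
          intervalIntegrable_const hrate
    _ = h * (hamiltonian f U x ℓ + ‖ℓ‖ * (K * (M * h))) := by
        rw [intervalIntegral.integral_const, sub_zero, smul_eq_mul]

end Hamiltonian

section ViscositySolution

variable {E V : Type*} [NormedAddCommGroup E] [NormedSpace ℝ E]

/-- `w` is a viscosity subsolution of the obstacle problem
`max {∂_T w - H(x, ∇w), w - ψ} = 0` on `E × (0, ∞)`. -/
def IsObstacleSubsolution (f : E → V → E) (U : Set V) (ψ w : E × ℝ → ℝ) : Prop :=
  ∀ p : E × ℝ, 0 < p.2 → ∀ φ : E × ℝ → ℝ, ContDiff ℝ 1 φ → IsLocalMax (fun q => w q - φ q) p →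
    max (fderiv ℝ φ p (0, 1) - hamiltonian f U p.1 (fderiv ℝ φ p ∘L .inl ℝ E ℝ)) (w p - ψ p) ≤ 0

/-- `w` is a viscosity supersolution of the obstacle problem
`max {∂_T w - H(x, ∇w), w - ψ} = 0` on `E × (0, ∞)`. -/
def IsObstacleSupersolution (f : E → V → E) (U : Set V) (ψ w : E × ℝ → ℝ) : Prop :=
  ∀ p : E × ℝ, 0 < p.2 → ∀ φ : E × ℝ → ℝ, ContDiff ℝ 1 φ → IsLocalMin (fun q => w q - φ q) p →
    0 ≤ max (fderiv ℝ φ p (0, 1) - hamiltonian f U p.1 (fderiv ℝ φ p ∘L .inl ℝ E ℝ)) (w p - ψ p)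

theorem apply_prodMk_eq (D : E × ℝ →L[ℝ] ℝ) (y : E) (s : ℝ) :
    D (y, s) = D (y, 0) + s * D (0, 1) := by
  rw [← smul_eq_mul, ← map_smul, ← map_add]
  simp

theorem eventually_sub_le_fderiv_of_isLocalMax {w φ : E × ℝ → ℝ} {x : E} {T : ℝ}
    (h : IsLocalMax (fun q => w q - φ q) (x, T)) (hφ : DifferentiableAt ℝ φ (x, T)) {M ε : ℝ}
    (hM : 0 ≤ M) (hε : 0 < ε) : ∀ᶠ s in 𝓝[>] (0 : ℝ), ∀ y, ‖y - x‖ ≤ M * s →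
      w (y, T - s) - w (x, T) ≤
        fderiv ℝ φ (x, T) (y - x, 0) - s * fderiv ℝ φ (x, T) (0, 1) + ε * s := by
  obtain ⟨δ, hδ, hnear⟩ := Metric.eventually_nhds_iff.1
    (h.and (hφ.hasFDerivAt.isLittleO.def (show 0 < ε / (M + 1) by positivity)))
  filter_upwards [Ioo_mem_nhdsGT (show 0 < δ / (M + 1) by positivity)] with s hs y hy
  have hstep : ‖(y, T - s) - (x, T)‖ ≤ (M + 1) * s := by
    refine max_le (hy.trans (by linarith [hs.1])) ?_
    simpa [abs_of_pos hs.1] using le_mul_of_one_le_left hs.1.le (le_add_of_nonneg_left hM)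
  obtain ⟨hmax, hlin⟩ := hnear (y := (y, T - s)) <| by
    rw [dist_eq_norm]
    exact hstep.trans_lt ((lt_div_iff₀' (by positivity)).1 hs.2)
  have herror : ε / (M + 1) * ‖(y, T - s) - (x, T)‖ ≤ ε * s :=
    (mul_le_mul_of_nonneg_left hstep (by positivity)).trans_eq (by field_simp)
  have hsplit := apply_prodMk_eq (fderiv ℝ φ (x, T)) (y - x) (T - s - T)
  simp only [Prod.mk_sub_mk] at hmax hlin herror
  linarith [(le_abs_self _).trans hlin]

namespace IsLipschitzControlSystem

variable [ProperSpace E] [TopologicalSpace V] [MeasurableSpace V] [OpensMeasurableSpace V]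
  {f : E → V → E} {U : Set V} {K C : ℝ≥0} {ψ : E × ℝ → ℝ}

theorem exists_nearlyOptimal_move (hf : IsLipschitzControlSystem f U K C)
    (hψ : ContinuousOn ψ {p | 0 ≤ p.2}) (x : E) {T : ℝ} (hT : 0 ≤ T) (ℓ : E →L[ℝ] ℝ) :
    ∃ M ≥ 0, ∃ A, ∀ s ∈ Icc 0 T, ∀ ε > 0, ∃ y, ‖y - x‖ ≤ M * s ∧
      ℓ (y - x) ≤ s * (hamiltonian f U x ℓ + A * s) ∧
      obstacleValue f U ψ x T - ε ≤ obstacleValue f U ψ y (T - s) := by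
  set M : ℝ := C + K * ((‖x‖ + C * T) * Real.exp (K * T))
  refine ⟨M, by positivity, ‖ℓ‖ * (K * M), fun s hs ε hε => ?_⟩
  obtain ⟨u, ξ, hξ, hopt⟩ := hf.exists_lt_obstaclePayoff
    (sub_lt_self (obstacleValue f U ψ x T) hε)
  have hspeed : ∀ r ∈ Icc 0 s, ‖ξ r - x‖ ≤ M * r := by
    intro r hr
    simpa only [hξ.apply_zero, sub_zero, abs_of_nonneg hr.1] using
      hξ.norm_sub_le_mul hf le_rfl (left_mem_Icc.2 hT) ⟨hr.1, hr.2.trans hs.2⟩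
  refine ⟨ξ s, hspeed s (right_mem_Icc.2 hs.1), ?_,
    hopt.le.trans (hf.obstaclePayoff_le_obstacleValue_shift hψ hξ hs)⟩
  simpa only [mul_assoc] using hξ.apply_sub_le hf (by positivity) hs.1 hspeed ℓ

theorem fderiv_le_hamiltonian_of_isLocalMax (hf : IsLipschitzControlSystem f U K C)
    (hψ : ContinuousOn ψ {p | 0 ≤ p.2}) {φ : E × ℝ → ℝ} {x : E} {T : ℝ} (hT : 0 < T)
    (hφ : DifferentiableAt ℝ φ (x, T))
    (hmax : IsLocalMax (fun q => obstacleValue f U ψ q.1 q.2 - φ q) (x, T)) :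
    fderiv ℝ φ (x, T) (0, 1) ≤ hamiltonian f U x (fderiv ℝ φ (x, T) ∘L .inl ℝ E ℝ) := by
  set ℓ : E →L[ℝ] ℝ := fderiv ℝ φ (x, T) ∘L .inl ℝ E ℝ with hℓ
  obtain ⟨M, hM, A, hmove⟩ := hf.exists_nearlyOptimal_move hψ x hT.le ℓ
  refine le_of_forall_pos_le_add fun ε hε => ?_
  have hrate : ∀ᶠ s in 𝓝[>] (0 : ℝ),
      fderiv ℝ φ (x, T) (0, 1) ≤ hamiltonian f U x ℓ + ε + (A + 1) * s := by
    filter_upwards [Ioo_mem_nhdsGT hT, eventually_sub_le_fderiv_of_isLocalMax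
      (w := fun q => obstacleValue f U ψ q.1 q.2) hmax hφ hM hε] with s hs hnear
    -- Optimality up to `s ^ 2` costs nothing against the time step `s`.
    obtain ⟨y, hy, hℓy, hopt⟩ := hmove s ⟨hs.1.le, hs.2.le⟩ (s ^ 2) (pow_pos hs.1 2)
    have hvalue := hnear y hy
    simp only [hℓ, ContinuousLinearMap.comp_apply, ContinuousLinearMap.inl_apply] at hℓy
    exact le_of_mul_le_mul_left (by linarith) hs.1
  refine ge_of_tendsto (tendsto_nhdsWithin_of_tendsto_nhds ?_) hrate
  exact Continuous.tendsto' (by fun_prop) _ _ (by simp)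

theorem isObstacleSubsolution_obstacleValue (hf : IsLipschitzControlSystem f U K C)
    (hψ : ContinuousOn ψ {p | 0 ≤ p.2}) :
    IsObstacleSubsolution f U ψ (fun p => obstacleValue f U ψ p.1 p.2) := fun p hp _ hφ hmax =>
  max_le
    (sub_nonpos.2 (hf.fderiv_le_hamiltonian_of_isLocalMax hψ hp
      (hφ.differentiable one_ne_zero).differentiableAt hmax))
    (sub_nonpos.2 (hf.obstacleValue_le_obstacle hψ hp.le p.1))

theorem eventually_obstacleValue_le (hf : IsLipschitzControlSystem f U K C)
    (hψ : ContinuousOn ψ {p | 0 ≤ p.2}) {x : E} {T : ℝ} (hT : 0 < T) {u : ℝ → V} {ξ : ℝ → E}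
    (hξ : IsControlledTrajectory f U x u ξ) (hlt : obstacleValue f U ψ x T < ψ (x, T)) :
    ∀ᶠ t in 𝓝[≥] 0, obstacleValue f U ψ (ξ t) (T - t) ≤ obstacleValue f U ψ x T := by
  obtain ⟨b, hb, hbψ⟩ := exists_between hlt
  have hψT : ContinuousAt ψ (x, T) :=
    hψ.continuousAt ((continuous_snd.tendsto (x, T)).eventually (Ici_mem_nhds hT))
  have hγ : Tendsto (fun t => (ξ t, T - t)) (𝓝 0) (𝓝 (x, T)) :=
    (hξ.isIntegralSolution.continuous.prodMk (continuous_const.sub continuous_id)).tendsto' _ _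
      (by simp [hξ.apply_zero])
  obtain ⟨δ, hδ, hnear⟩ := Metric.eventually_nhds_iff.1
    ((hψT.tendsto.comp hγ).eventually (lt_mem_nhds hbψ))
  filter_upwards [Ico_mem_nhdsGE (show 0 < min T δ from lt_min hT hδ)] with t ht
  obtain ⟨htT, htδ⟩ := lt_min_iff.1 ht.2
  by_contra! hgt
  refine (lt_min hb hgt).not_ge (hf.le_obstacleValue_of_forall_le hψ hξ ⟨ht.1, htT.le⟩
    (fun s hs => (min_le_left _ _).trans (hnear ?_).le) (min_le_right _ _))
  simpa [abs_of_nonneg hs.1] using hs.2.trans_lt htδ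

theorem isObstacleSupersolution_obstacleValue (hf : IsLipschitzControlSystem f U K C)
    (hψ : ContinuousOn ψ {p | 0 ≤ p.2}) :
    IsObstacleSupersolution f U ψ (fun p => obstacleValue f U ψ p.1 p.2) := by
  rintro ⟨x, T⟩ (hT : 0 < T) φ hφ hmin
  set D := fderiv ℝ φ (x, T)
  refine le_max_iff.2 (or_iff_not_imp_right.2 fun hlt => sub_nonneg.2 ?_)
  replace hlt : obstacleValue f U ψ x T < ψ (x, T) := sub_neg.1 (not_le.1 hlt)
  refine hf.hamiltonian_le fun v hv => ?_
  obtain ⟨ξ, hξ⟩ := hf.exists_isControlledTrajectory measurable_const (fun _ _ => hv) x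
  set γ : ℝ → E × ℝ := fun t => (ξ t, T - t)
  have hγ0 : γ 0 = (x, T) := by simp [γ, hξ.apply_zero]
  have hγ : Continuous γ := by
    have := hξ.isIntegralSolution.continuous
    fun_prop
  have hγ' : HasDerivWithinAt γ (f x v, -1) (Ici 0) 0 :=
    (hξ.hasDerivWithinAt_zero hf).prodMk ((hasDerivAt_id 0).const_sub T).hasDerivWithinAt
  have hmaxOn : IsLocalMaxOn (φ ∘ γ) (Ici 0) 0 := by
    filter_upwards [hf.eventually_obstacleValue_le hψ hT hξ hlt,
      (hγ.tendsto' 0 _ hγ0).eventually hmin |>.filter_mono nhdsWithin_le_nhds] with t hval hloc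
    simp only [Function.comp_apply, hγ0]
    linarith
  have hφγ : HasDerivWithinAt (φ ∘ γ) (D (f x v, -1)) (Ici 0) 0 :=
    HasFDerivAt.comp_hasDerivWithinAt_of_eq 0
      (hφ.differentiable one_ne_zero).differentiableAt.hasFDerivAt hγ' hγ0.symm
  have hnonpos := hmaxOn.hasFDerivWithinAt_nonpos hφγ.hasFDerivWithinAt (y := 1)
    (mem_posTangentConeAt_of_segment_subset
      (by rw [zero_add, segment_eq_Icc zero_le_one]; exact Icc_subset_Ici_self))
  have hsplit := apply_prodMk_eq D (f x v) (-1)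
  simp only [ContinuousLinearMap.toSpanSingleton_apply, one_smul] at hnonpos
  simp only [ContinuousLinearMap.comp_apply, ContinuousLinearMap.inl_apply]
  linarith

end IsLipschitzControlSystem

end ViscositySolution

section Penalization

variable {X : Type*} [PseudoMetricSpace X] {S : Set X} {Φ P : X → ℝ}

theorem exists_isMaxOn_sub_mul (hS : IsCompact S) (hΦ : ContinuousOn Φ S) (hP : ContinuousOn P S)
    (hP0 : ∀ p ∈ S, 0 ≤ P p) (hzero : ∃ p ∈ S, P p = 0) :
    ∃ z ∈ S, P z = 0 ∧ (∀ p ∈ S, P p = 0 → Φ p ≤ Φ z) ∧ ∀ W ∈ 𝓝 z, ∀ ε > 0,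
      ∃ k : ℕ, ∃ p ∈ S ∩ W, IsMaxOn (fun q => Φ q - k * P q) S p ∧ k * P p < ε := by
  obtain ⟨p₀, hp₀, hPp₀⟩ := hzero
  choose p hpS hpmax using fun k : ℕ =>
    hS.exists_isMaxOn ⟨p₀, hp₀⟩ (hΦ.sub (continuousOn_const.mul hP) : ContinuousOn
      (fun q => Φ q - k * P q) S)
  obtain ⟨z, hz, σ, hσ, hlim⟩ := hS.tendsto_subseq hpS
  have hlimS : Tendsto (p ∘ σ) atTop (𝓝[S] z) :=
    tendsto_nhdsWithin_iff.2 ⟨hlim, .of_forall fun j => hpS (σ j)⟩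
  have hΦlim : Tendsto (fun j => Φ (p (σ j))) atTop (𝓝 (Φ z)) := (hΦ z hz).tendsto.comp hlimS
  have hPlim : Tendsto (fun j => P (p (σ j))) atTop (𝓝 (P z)) := (hP z hz).tendsto.comp hlimS
  have hpenalty : ∀ q ∈ S, P q = 0 → ∀ k, k * P (p k) ≤ Φ (p k) - Φ q := by
    intro q hq hPq k
    have hle : Φ q - k * P q ≤ Φ (p k) - k * P (p k) := hpmax k hq
    rw [hPq] at hle
    linarith
  have hmax : ∀ q ∈ S, P q = 0 → Φ q ≤ Φ z := fun q hq hPq =>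
    ge_of_tendsto hΦlim (.of_forall fun j => sub_nonneg.1
      ((mul_nonneg (Nat.cast_nonneg _) (hP0 _ (hpS _))).trans (hpenalty q hq hPq (σ j))))
  have hPz : P z = 0 := by
    have hdiv : Tendsto (fun j => (Φ (p (σ j)) - Φ p₀) / σ j) atTop (𝓝 0) :=
      (hΦlim.sub_const _).div_atTop (tendsto_natCast_atTop_atTop.comp hσ.tendsto_atTop)
    refine (le_of_tendsto_of_tendsto hPlim hdiv ?_).antisymm (hP0 z hz)
    filter_upwards [eventually_gt_atTop 0] with j hj
    have hσj : (0 : ℝ) < σ j := Nat.cast_pos.2 (hj.trans_le (hσ.le_apply))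
    exact (le_div_iff₀' hσj).2 (hpenalty p₀ hp₀ hPp₀ (σ j))
  refine ⟨z, hz, hPz, hmax, fun W hW ε hε => ?_⟩
  obtain ⟨j, hjW, hjΦ⟩ := ((hlim.eventually hW).and
    (hΦlim.eventually (gt_mem_nhds (lt_add_of_pos_right _ hε)))).exists
  exact ⟨σ j, p (σ j), ⟨hpS _, hjW⟩, hpmax _, by linarith [hpenalty z hz hPz (σ j)]⟩

end Penalization

section EuclideanSq

variable {G : Type*} [NormedAddCommGroup G] [NormedSpace ℝ G] [FiniteDimensional ℝ G]

/-- A smooth substitute for `‖z‖ ^ 2`, which need not be differentiable: the square of a Euclidean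
norm equivalent to the given one. -/
def euclideanSq (z : G) : ℝ :=
  ‖toEuclidean z‖ ^ 2

theorem euclideanSq_nonneg (z : G) : 0 ≤ euclideanSq z :=
  sq_nonneg _

theorem euclideanSq_eq_zero {z : G} : euclideanSq z = 0 ↔ z = 0 := by
  simp [euclideanSq]

theorem contDiff_euclideanSq : ContDiff ℝ 1 (euclideanSq : G → ℝ) :=
  (contDiff_norm_sq ℝ).comp toEuclidean.contDiff

theorem fderiv_euclideanSq_apply (z v : G) :
    fderiv ℝ euclideanSq z v = 2 * inner ℝ (toEuclidean z) (toEuclidean v) := by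
  have h := (toEuclidean (E := G)).hasFDerivAt (x := z) |>.norm_sq
  simp [show fderiv ℝ euclideanSq z = _ from h.fderiv]

theorem isCompact_euclideanSq_le (r : ℝ) : IsCompact {z : G | euclideanSq z ≤ r} := by
  refine (Euclidean.isCompact_closedBall (x := (0 : G)) (r := √r)).of_isClosed_subset
    (isClosed_le contDiff_euclideanSq.continuous continuous_const) fun z hz => ?_
  simpa [Euclidean.closedBall, Euclidean.dist] using Real.abs_le_sqrt hz

variable (G) in
theorem exists_fderiv_euclideanSq_le : ∃ c : ℝ, 0 ≤ c ∧ ∀ (z v : G) (b r : ℝ), 0 ≤ b → 0 ≤ r →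
    ‖v‖ ≤ b + r * ‖z‖ → fderiv ℝ euclideanSq z v ≤ c * (b + (b + r) * euclideanSq z) := by
  set L : G ≃L[ℝ] _ := toEuclidean
  set A : ℝ := ‖(L : G →L[ℝ] EuclideanSpace ℝ (Fin (Module.finrank ℝ G)))‖
  set B : ℝ := ‖(L.symm : EuclideanSpace ℝ (Fin (Module.finrank ℝ G)) →L[ℝ] G)‖
  refine ⟨A + 2 * A * B, by positivity, fun z v b r hb hr hv => ?_⟩
  have hz : ‖z‖ ≤ B * ‖L z‖ := by
    simpa using (L.symm : EuclideanSpace ℝ (Fin (Module.finrank ℝ G)) →L[ℝ] G).le_opNorm (L z)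
  have hLv : ‖L v‖ ≤ A * (b + r * (B * ‖L z‖)) :=
    ((L : G →L[ℝ] EuclideanSpace ℝ (Fin (Module.finrank ℝ G))).le_opNorm v).trans
      (by gcongr; exact hv.trans (by gcongr))
  calc fderiv ℝ euclideanSq z v = 2 * inner ℝ (L z) (L v) := fderiv_euclideanSq_apply z v
    _ ≤ 2 * (‖L z‖ * (A * (b + r * (B * ‖L z‖)))) := by
        gcongr
        exact (real_inner_le_norm _ _).trans (by gcongr)
    _ ≤ (A + 2 * A * B) * (b + (b + r) * euclideanSq z) := by
        have hsq : 2 * ‖L z‖ * (A * b) ≤ (1 + ‖L z‖ ^ 2) * (A * b) := by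
          gcongr
          linarith [sq_nonneg (1 - ‖L z‖)]
        have hcross : 0 ≤ A * r * ‖L z‖ ^ 2 + 2 * A * B * (b * (1 + ‖L z‖ ^ 2)) := by positivity
        change _ ≤ (A + 2 * A * B) * (b + (b + r) * ‖L z‖ ^ 2)
        linarith

end EuclideanSq

section Barrier

variable {E V : Type*} [NormedAddCommGroup E] [NormedSpace ℝ E] {f : E → V → E} {U : Set V}

/-- `χ` is a barrier on `S` with margin `η`: a smooth function with
`∂_T χ ≥ H(x, ∇χ) + η` on `S`, for the Hamiltonian `H` of the dynamics `f`. -/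
structure IsBarrierOn (f : E → V → E) (U : Set V) (χ : E × ℝ → ℝ) (η : ℝ) (S : Set (E × ℝ)) :
    Prop where
  contDiff : ContDiff ℝ 1 χ
  fderiv_add_le : ∀ p ∈ S, ∀ v ∈ U, fderiv ℝ χ p (f p.1 v, 0) + η ≤ fderiv ℝ χ p (0, 1)

theorem IsBarrierOn.mono {χ : E × ℝ → ℝ} {η : ℝ} {S S' : Set (E × ℝ)} (h : IsBarrierOn f U χ η S')
    (hS : S ⊆ S') : IsBarrierOn f U χ η S :=
  ⟨h.contDiff, fun p hp => h.fderiv_add_le p (hS hp)⟩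

theorem IsBarrierOn.exp {ρ : E × ℝ → ℝ} {η : ℝ} {S : Set (E × ℝ)} (h : IsBarrierOn f U ρ η S)
    (hη : 0 ≤ η) (hρ : ∀ p ∈ S, 0 ≤ ρ p) {A l : ℝ} (hA : 0 ≤ A) (hl : 0 ≤ l) :
    IsBarrierOn f U (fun p => A * Real.exp (l * ρ p)) (A * l * η) S where
  contDiff := by
    have := h.contDiff
    fun_prop
  fderiv_add_le p hp v hv := by
    have hρp : HasFDerivAt ρ (fderiv ℝ ρ p) p :=
      (h.contDiff.differentiable one_ne_zero).differentiableAt.hasFDerivAt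
    have hexp : 1 ≤ Real.exp (l * ρ p) := Real.one_le_exp (mul_nonneg hl (hρ p hp))
    have hderiv : ∀ z, fderiv ℝ (fun p => A * Real.exp (l * ρ p)) p z =
        A * l * Real.exp (l * ρ p) * fderiv ℝ ρ p z := by
      intro z
      rw [((hρp.const_mul l).exp.const_mul A).fderiv]
      simp only [smul_apply, smul_eq_mul]
      ring
    rw [hderiv, hderiv]
    have hmargin : A * l * η ≤ A * l * Real.exp (l * ρ p) * η :=
      mul_le_mul_of_nonneg_right (le_mul_of_one_le_right (mul_nonneg hA hl) hexp) hη
    have hscaled : A * l * Real.exp (l * ρ p) * (fderiv ℝ ρ p (f p.1 v, 0) + η) ≤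
        A * l * Real.exp (l * ρ p) * fderiv ℝ ρ p (0, 1) := by
      gcongr
      exact h.fderiv_add_le p hp v hv
    linarith

variable [TopologicalSpace V] {K C : ℝ≥0} {ψ w₁ w₂ χ θ : E × ℝ → ℝ} {η δ : ℝ} {a b : E × ℝ}
  {S : Set (E × ℝ)}

-- At the doubled maximum `∇θ (a - b)` is a supergradient of `w₁ - χ` at `a` and a subgradient of
-- `w₂` at `b`, so it cancels between the two equations up to the variation of `f`.
theorem IsObstacleSubsolution.le_and_le_or_margin_le (h₁ : IsObstacleSubsolution f U ψ w₁)
    (h₂ : IsObstacleSupersolution f U ψ w₂) (hf : IsLipschitzControlSystem f U K C)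
    (hχ : IsBarrierOn f U χ η S) (haS : a ∈ S) (ha : 0 < a.2) (hb : 0 < b.2)
    (hθ : ContDiff ℝ 1 θ) (hδ : ∀ v ∈ U, fderiv ℝ θ (a - b) (f a.1 v - f b.1 v, 0) ≤ δ)
    (hmax : IsLocalMax (fun q => w₁ q - (χ q + θ (q - b))) a)
    (hmin : IsLocalMin (fun q => w₂ q - -θ (a - q)) b) :
    w₁ a ≤ ψ a ∧ (ψ b ≤ w₂ b ∨ η ≤ δ) := by
  set D := fderiv ℝ θ (a - b)
  have hθ' : Differentiable ℝ θ := hθ.differentiable one_ne_zero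
  have hχ' : Differentiable ℝ χ := hχ.contDiff.differentiable one_ne_zero
  have hDa : fderiv ℝ (fun q => χ q + θ (q - b)) a = fderiv ℝ χ a + D := by
    rw [fderiv_fun_add hχ'.differentiableAt (by fun_prop), fderiv_comp_sub]
  have hDb : fderiv ℝ (fun q => -θ (a - q)) b = D := by
    have h := hθ'.differentiableAt.hasFDerivAt.comp b ((hasFDerivAt_id b).const_sub a)
    rw [fderiv_fun_neg, show fderiv ℝ (fun q => θ (a - q)) b = _ from h.fderiv]
    ext z <;> simp [D]
  have hχ_contDiff := hχ.contDiff
  obtain ⟨hsub, hψ⟩ := max_le_iff.1 (h₁ a ha _ (by fun_prop) hmax)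
  have hsuper := le_max_iff.1 (h₂ b hb _ (by fun_prop) hmin)
  refine ⟨sub_nonpos.1 hψ, hsuper.symm.imp sub_nonneg.1 fun hsuper => ?_⟩
  rw [hDa] at hsub
  rw [hDb] at hsuper
  have hham : hamiltonian f U a.1 ((fderiv ℝ χ a + D) ∘L .inl ℝ E ℝ) ≤
      fderiv ℝ χ a (0, 1) - η + hamiltonian f U b.1 (D ∘L .inl ℝ E ℝ) + δ := by
    refine hf.hamiltonian_le fun v hv => ?_
    have hb_le := hf.apply_le_hamiltonian hv b.1 (D ∘L .inl ℝ E ℝ)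
    have hsplit : D (f a.1 v - f b.1 v, 0) = D (f a.1 v, 0) - D (f b.1 v, 0) := by
      rw [← map_sub, Prod.mk_sub_mk, sub_zero]
    simp only [ContinuousLinearMap.comp_apply, ContinuousLinearMap.inl_apply,
      add_apply] at hb_le ⊢
    linarith [hχ.fderiv_add_le a haS v hv, hδ v hv]
  simp only [add_apply] at hsub
  linarith

theorem interior_setOf_snd_nonneg (X : Type*) [TopologicalSpace X] :
    interior {p : X × ℝ | 0 ≤ p.2} = {p | 0 < p.2} := by
  have h := isOpenMap_snd.preimage_interior_eq_interior_preimage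
    (continuous_snd (X := X)) (Ici (0 : ℝ))
  rw [interior_Ici] at h
  exact h.symm

theorem IsObstacleSubsolution.le_and_le_or_margin_le_of_isMaxOn
    (h₁ : IsObstacleSubsolution f U ψ w₁) (h₂ : IsObstacleSupersolution f U ψ w₂)
    (hf : IsLipschitzControlSystem f U K C) (hχ : IsBarrierOn f U χ η S)
    (hS : S ⊆ {p | 0 ≤ p.2}) (ha : a ∈ interior S) (hb : b ∈ interior S)
    (hθ : ContDiff ℝ 1 θ) (hδ : ∀ v ∈ U, fderiv ℝ θ (a - b) (f a.1 v - f b.1 v, 0) ≤ δ)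
    (hmax : IsMaxOn (fun q : (E × ℝ) × (E × ℝ) => w₁ q.1 - w₂ q.2 - χ q.1 - θ (q.1 - q.2))
      (S ×ˢ S) (a, b)) :
    w₁ a ≤ ψ a ∧ (ψ b ≤ w₂ b ∨ η ≤ δ) := by
  have hpos : interior S ⊆ {p | 0 < p.2} := interior_setOf_snd_nonneg E ▸ interior_mono hS
  have haS := interior_subset ha
  have hbS := interior_subset hb
  refine h₁.le_and_le_or_margin_le h₂ hf hχ haS (hpos ha) (hpos hb) hθ hδ ?_ ?_
  · filter_upwards [mem_interior_iff_mem_nhds.1 ha] with q hq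
    linarith [isMaxOn_iff.1 hmax (q, b) ⟨hq, hbS⟩]
  · filter_upwards [mem_interior_iff_mem_nhds.1 hb] with q hq
    linarith [isMaxOn_iff.1 hmax (a, q) ⟨haS, hq⟩]

end Barrier

section Doubling

theorem eventually_sub_lt_sub_of_lt {X : Type*} [TopologicalSpace X] {ψ w₁ w₂ : X → ℝ} {z : X}
    (hψ : ContinuousAt ψ z) (hw₁ : ContinuousAt w₁ z) (hw₂ : ContinuousAt w₂ z)
    (hlt : w₂ z < w₁ z) : ∀ᶠ q : X × X in 𝓝 (z, z), ψ q.1 - ψ q.2 < w₁ q.1 - w₂ q.2 := by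
  refine ContinuousAt.eventually_lt ?_ ?_ (by simpa using hlt)
  · exact (hψ.comp_of_eq continuousAt_fst rfl).sub (hψ.comp_of_eq continuousAt_snd rfl)
  · exact (hw₁.comp_of_eq continuousAt_fst rfl).sub (hw₂.comp_of_eq continuousAt_snd rfl)

variable {E V : Type*} [NormedAddCommGroup E] [NormedSpace ℝ E] [FiniteDimensional ℝ E]
  [TopologicalSpace V] {f : E → V → E} {U : Set V} {K C : ℝ≥0} {ψ w₁ w₂ χ : E × ℝ → ℝ} {η : ℝ}
  {S : Set (E × ℝ)}

theorem IsLipschitzControlSystem.fderiv_euclideanSq_le (hf : IsLipschitzControlSystem f U K C) :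
    ∃ c : ℝ, 0 ≤ c ∧ ∀ a b : E × ℝ, ∀ v ∈ U,
      fderiv ℝ euclideanSq (a - b) (f a.1 v - f b.1 v, 0) ≤ c * euclideanSq (a - b) := by
  obtain ⟨c, hc, hgrad⟩ := exists_fderiv_euclideanSq_le (E × ℝ)
  refine ⟨c * K, by positivity, fun a b v hv => ?_⟩
  have hlip : ‖((f a.1 v - f b.1 v, 0) : E × ℝ)‖ ≤ 0 + K * ‖a - b‖ := by
    rw [Prod.norm_mk, norm_zero, max_eq_left (norm_nonneg _), zero_add]
    exact ((hf.lipschitz v hv).norm_sub_le a.1 b.1).trans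
      (by gcongr; exact norm_fst_le (a - b))
  simpa [mul_assoc] using hgrad (a - b) _ 0 K le_rfl K.coe_nonneg hlip

theorem exists_doubled_isMaxOn {S : Set (E × ℝ)} (hS : IsCompact S) (hw₁ : ContinuousOn w₁ S)
    (hw₂ : ContinuousOn w₂ S) (hχ : ContinuousOn χ S) {p : E × ℝ} (hp : p ∈ S) :
    ∃ z ∈ S, w₁ p - w₂ p - χ p ≤ w₁ z - w₂ z - χ z ∧
      ∀ N ∈ 𝓝 (z, z), ∀ ε > 0, ∃ k : ℕ, ∃ a b, (a, b) ∈ N ∧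
        IsMaxOn (fun q : (E × ℝ) × (E × ℝ) => w₁ q.1 - w₂ q.2 - χ q.1 -
          k * euclideanSq (q.1 - q.2)) (S ×ˢ S) (a, b) ∧
        k * euclideanSq (a - b) < ε := by
  have hΦ : ContinuousOn (fun q : (E × ℝ) × (E × ℝ) => w₁ q.1 - w₂ q.2 - χ q.1) (S ×ˢ S) :=
    ((hw₁.comp continuousOn_fst fun q hq => hq.1).sub
      (hw₂.comp continuousOn_snd fun q hq => hq.2)).sub
      (hχ.comp continuousOn_fst fun q hq => hq.1)
  have hP : Continuous fun q : (E × ℝ) × (E × ℝ) => euclideanSq (q.1 - q.2) :=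
    contDiff_euclideanSq.continuous.comp (continuous_fst.sub continuous_snd)
  obtain ⟨⟨z, z'⟩, hz, hPz, hzmax, hnear⟩ := exists_isMaxOn_sub_mul (hS.prod hS) hΦ
    hP.continuousOn (fun q _ => euclideanSq_nonneg _)
    ⟨(p, p), ⟨hp, hp⟩, by simp [euclideanSq_eq_zero]⟩
  obtain rfl : z = z' := sub_eq_zero.1 (euclideanSq_eq_zero.1 hPz)
  refine ⟨z, hz.1, hzmax (p, p) ⟨hp, hp⟩ (by simp [euclideanSq_eq_zero]), fun N hN ε hε => ?_⟩
  obtain ⟨k, ⟨a, b⟩, hab, hmax, hsmall⟩ := hnear N hN ε hε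
  exact ⟨k, a, b, hab.2, hmax, hsmall⟩

theorem sub_le_of_isBarrierOn (hf : IsLipschitzControlSystem f U K C)
    (hψ : ContinuousOn ψ {p | 0 ≤ p.2}) (h₁ : IsObstacleSubsolution f U ψ w₁)
    (hw₁ : ContinuousOn w₁ {p | 0 ≤ p.2}) (h₂ : IsObstacleSupersolution f U ψ w₂)
    (hw₂ : ContinuousOn w₂ {p | 0 ≤ p.2}) (hχ : IsBarrierOn f U χ η S) (hη : 0 < η)
    (hχ0 : ∀ p ∈ S, 0 ≤ χ p) (hS : IsCompact S) (hSt : S ⊆ {p | 0 ≤ p.2})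
    (hbdry : ∀ p ∈ S \ interior S, w₁ p - w₂ p ≤ χ p) : ∀ p ∈ S, w₁ p - w₂ p ≤ χ p := by
  by_contra! ⟨p, hp, hlt⟩
  obtain ⟨c, hc, hgrad⟩ := hf.fderiv_euclideanSq_le
  obtain ⟨z, hz, hpz, hnear⟩ := exists_doubled_isMaxOn hS (hw₁.mono hSt) (hw₂.mono hSt)
    hχ.contDiff.continuous.continuousOn hp
  have hχz : χ z < w₁ z - w₂ z := by linarith
  have hzS : z ∈ interior S := by_contra fun h => hχz.not_ge (hbdry z ⟨hz, h⟩)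
  have hz0 : {p : E × ℝ | 0 ≤ p.2} ∈ 𝓝 z :=
    mem_of_superset (mem_interior_iff_mem_nhds.1 hzS) hSt
  have hgap := eventually_sub_lt_sub_of_lt (hψ.continuousAt hz0) (hw₁.continuousAt hz0)
    (hw₂.continuousAt hz0) (sub_pos.1 ((hχ0 z hz).trans_lt hχz))
  obtain ⟨k, a, b, ⟨⟨ha, hb⟩, hψab⟩, hmax, hsmall⟩ := hnear _
    (inter_mem ((isOpen_interior.prod isOpen_interior).mem_nhds ⟨hzS, hzS⟩) hgap)
    (η / (c + 1)) (by positivity)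
  have hθ (v) (hv : v ∈ U) : fderiv ℝ (fun q : E × ℝ => k * euclideanSq q) (a - b)
      (f a.1 v - f b.1 v, 0) ≤ k * (c * euclideanSq (a - b)) := by
    rw [fderiv_const_mul (contDiff_euclideanSq.differentiable one_ne_zero).differentiableAt]
    exact mul_le_mul_of_nonneg_left (hgrad a b v hv) k.cast_nonneg
  obtain ⟨hψa, hψb | hηk⟩ := h₁.le_and_le_or_margin_le_of_isMaxOn h₂ hf hχ hSt ha hb
    (contDiff_const.mul contDiff_euclideanSq) hθ hmax
  · exact hψab.not_ge (sub_le_sub hψa hψb)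
  · have hk : 0 ≤ k * euclideanSq (a - b) := mul_nonneg k.cast_nonneg (euclideanSq_nonneg _)
    rw [lt_div_iff₀ (by positivity)] at hsmall
    linarith

end Doubling

section Comparison

variable {E V : Type*} [NormedAddCommGroup E] [NormedSpace ℝ E] [FiniteDimensional ℝ E]

/-- A Lyapunov function for dynamics of linear growth on `E`: for large `c` its growth in `T`
absorbs the transport along the dynamics, and its sublevel sets in `E × [0, ∞)` are compact. -/
def lyapunov (c : ℝ) (p : E × ℝ) : ℝ :=
  Real.exp (c * p.2) * (1 + euclideanSq p.1)

theorem one_le_lyapunov {c : ℝ} (hc : 0 ≤ c) {p : E × ℝ} (hp : 0 ≤ p.2) : 1 ≤ lyapunov c p :=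
  one_le_mul_of_one_le_of_one_le (Real.one_le_exp (mul_nonneg hc hp))
    (le_add_of_nonneg_right (euclideanSq_nonneg _))

theorem contDiff_lyapunov (c : ℝ) : ContDiff ℝ 1 (lyapunov c : E × ℝ → ℝ) := by
  have := contDiff_euclideanSq (G := E)
  unfold lyapunov
  fun_prop

theorem isCompact_lyapunov_le {c : ℝ} (hc : 0 < c) (R : ℝ) :
    IsCompact {p : E × ℝ | 0 ≤ p.2 ∧ lyapunov c p ≤ R} := by
  refine ((isCompact_euclideanSq_le R).prod
    (isCompact_Icc (a := 0) (b := R / c))).of_isClosed_subset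
    ((isClosed_le continuous_const continuous_snd).inter
      (isClosed_le (contDiff_lyapunov c).continuous continuous_const)) ?_
  rintro ⟨x, t⟩ ⟨ht : 0 ≤ t, hR : Real.exp (c * t) * (1 + euclideanSq x) ≤ R⟩
  have hx := euclideanSq_nonneg x
  have hexp := Real.add_one_le_exp (c * t)
  have hct := mul_nonneg hc.le ht
  exact ⟨show euclideanSq x ≤ R by nlinarith, ht, (le_div_iff₀' hc).2 (by nlinarith)⟩

theorem fderiv_lyapunov_apply (c : ℝ) (p q : E × ℝ) : fderiv ℝ (lyapunov c) p q =
    Real.exp (c * p.2) * (c * q.2 * (1 + euclideanSq p.1) + fderiv ℝ euclideanSq p.1 q.1) := by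
  have hexp := ((hasFDerivAt_snd (𝕜 := ℝ) (p := p)).const_mul c).exp
  have hsq := ((contDiff_euclideanSq.differentiable one_ne_zero).differentiableAt.hasFDerivAt.comp p
    (hasFDerivAt_fst (𝕜 := ℝ))).const_add 1
  rw [show fderiv ℝ (lyapunov c) p = _ from (hexp.mul hsq).fderiv]
  simp
  ring

variable [TopologicalSpace V] {f : E → V → E} {U : Set V} {K C : ℝ≥0} {ψ w₁ w₂ : E × ℝ → ℝ}

theorem IsLipschitzControlSystem.exists_isBarrierOn_lyapunov
    (hf : IsLipschitzControlSystem f U K C) :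
    ∃ c : ℝ, 0 < c ∧ IsBarrierOn f U (lyapunov c) 1 {p | 0 ≤ p.2} := by
  obtain ⟨c, hc, hgrad⟩ := exists_fderiv_euclideanSq_le E
  refine ⟨c * (C + K) + 1, by positivity, contDiff_lyapunov _, fun p (hp : 0 ≤ p.2) v hv => ?_⟩
  have hgrowth : fderiv ℝ euclideanSq p.1 (f p.1 v) ≤ c * (C + (C + K) * euclideanSq p.1) :=
    hgrad _ _ C K C.coe_nonneg K.coe_nonneg (hf.norm_le hv p.1)
  have hsq := euclideanSq_nonneg p.1
  have hcK : 0 ≤ c * K := by positivity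
  have hexp : 1 ≤ Real.exp ((c * (C + K) + 1) * p.2) := Real.one_le_exp (by positivity)
  have hmargin : fderiv ℝ euclideanSq p.1 (f p.1 v) + 1 ≤
      (c * (C + K) + 1) * (1 + euclideanSq p.1) := by linarith
  simp only [fderiv_lyapunov_apply, mul_zero, zero_mul, zero_add, mul_one, map_zero, add_zero]
  calc _ ≤ Real.exp ((c * (C + K) + 1) * p.2) * (fderiv ℝ euclideanSq p.1 (f p.1 v) + 1) := by
        linarith
    _ ≤ _ := by gcongr

theorem mem_interior_setOf_lyapunov_le {c R : ℝ} {p : E × ℝ} (hp : 0 < p.2)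
    (hR : lyapunov c p < R) : p ∈ interior {p : E × ℝ | 0 ≤ p.2 ∧ lyapunov c p ≤ R} :=
  mem_interior.2 ⟨{p | 0 < p.2 ∧ lyapunov c p < R}, fun _ hq => ⟨hq.1.le, hq.2.le⟩,
    (isOpen_lt continuous_const continuous_snd).inter
      (isOpen_lt (contDiff_lyapunov c).continuous continuous_const), hp, hR⟩

namespace IsObstacleSubsolution

theorem sub_le_mul_exp_lyapunov (h₁ : IsObstacleSubsolution f U ψ w₁)
    (h₂ : IsObstacleSupersolution f U ψ w₂) (hf : IsLipschitzControlSystem f U K C)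
    (hψ : ContinuousOn ψ {p | 0 ≤ p.2}) (hw₁ : ContinuousOn w₁ {p | 0 ≤ p.2})
    (hw₂ : ContinuousOn w₂ {p | 0 ≤ p.2}) (h0 : ∀ x, w₁ (x, 0) ≤ w₂ (x, 0)) {c l M R : ℝ}
    (hc : 0 < c) (hρ : IsBarrierOn f U (lyapunov c) 1 {p | 0 ≤ p.2}) (hl : 0 < l) (hM : 0 < M)
    (hle : ∀ p, 0 ≤ p.2 → lyapunov c p ≤ R → w₁ p - w₂ p ≤ M) :
    ∀ p, 0 ≤ p.2 → lyapunov c p ≤ R →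
      w₁ p - w₂ p ≤ M * Real.exp (-(l * R)) * Real.exp (l * lyapunov c p) := by
  have hSt : {p : E × ℝ | 0 ≤ p.2 ∧ lyapunov c p ≤ R} ⊆ {p | 0 ≤ p.2} := fun p hp => hp.1
  have hbarrier := (hρ.mono hSt).exp zero_le_one
    (fun p hp => zero_le_one.trans (one_le_lyapunov hc.le hp.1))
    (A := M * Real.exp (-(l * R))) (by positivity) hl.le
  refine fun p hp hpR => sub_le_of_isBarrierOn hf hψ h₁ hw₁ h₂ hw₂ hbarrier (by positivity)
    (fun q _ => by positivity) (isCompact_lyapunov_le hc R) hSt ?_ p ⟨hp, hpR⟩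
  rintro ⟨x, t⟩ ⟨⟨ht : 0 ≤ t, hxR⟩, hnot⟩
  rcases ht.eq_or_lt with rfl | ht
  · exact (sub_nonpos.2 (h0 x)).trans (by positivity)
  · have hR : lyapunov c (x, t) = R :=
      by_contra fun h => hnot (mem_interior_setOf_lyapunov_le ht (hxR.lt_of_ne h))
    rw [mul_assoc, ← Real.exp_add, hR, neg_add_cancel, Real.exp_zero, mul_one]
    exact hle (x, t) ht.le hxR

theorem le_of_isObstacleSupersolution (h₁ : IsObstacleSubsolution f U ψ w₁)
    (h₂ : IsObstacleSupersolution f U ψ w₂) (hf : IsLipschitzControlSystem f U K C)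
    (hψ : ContinuousOn ψ {p | 0 ≤ p.2}) (hw₁ : ContinuousOn w₁ {p | 0 ≤ p.2})
    (hw₂ : ContinuousOn w₂ {p | 0 ≤ p.2}) (h0 : ∀ x, w₁ (x, 0) ≤ w₂ (x, 0)) {p : E × ℝ}
    (hp : 0 ≤ p.2) : w₁ p ≤ w₂ p := by
  obtain ⟨c, hc, hρ⟩ := hf.exists_isBarrierOn_lyapunov
  set R := lyapunov c p + 1 with hR
  obtain ⟨M, hM⟩ := (isCompact_lyapunov_le hc R).exists_bound_of_continuousOn
    ((hw₁.sub hw₂).mono fun q hq => hq.1)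
  have hle (q : E × ℝ) (hq : 0 ≤ q.2) (hqR : lyapunov c q ≤ R) : w₁ q - w₂ q ≤ max M 1 :=
    (le_abs_self _).trans ((hM q ⟨hq, hqR⟩).trans (le_max_left _ _))
  have hdecay : ∀ l : ℝ, 0 < l → w₁ p - w₂ p ≤ max M 1 * Real.exp (-l) := by
    intro l hl
    have h := h₁.sub_le_mul_exp_lyapunov h₂ hf hψ hw₁ hw₂ h0 hc hρ hl
      (lt_max_of_lt_right one_pos) hle p hp (by linarith)
    rwa [mul_assoc, ← Real.exp_add, show -(l * R) + l * lyapunov c p = -l by rw [hR]; ring] at h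
  have hlim : Tendsto (fun l : ℝ => max M 1 * Real.exp (-l)) atTop (𝓝 0) := by
    simpa using Real.tendsto_exp_neg_atTop_nhds_zero.const_mul (max M 1)
  exact sub_nonpos.1 (ge_of_tendsto hlim ((eventually_gt_atTop 0).mono hdecay))

end IsObstacleSubsolution

end Comparison

theorem exists_isLipschitzControlSystem {E V : Type*} [NormedAddCommGroup E]
    [PseudoMetricSpace V] {f : E → V → E} {U : Set V} (hU : IsCompact U) (hUne : U.Nonempty)
    {K : ℝ≥0} (hf : LipschitzOnWith K (Function.uncurry f) (univ ×ˢ U)) :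
    ∃ C, IsLipschitzControlSystem f U K C := by
  have hcont (x : E) : ContinuousOn (f x) U :=
    hf.continuousOn.comp (by fun_prop : ContinuousOn (fun u => (x, u)) U) fun u hu => ⟨trivial, hu⟩
  obtain ⟨C, hC⟩ := hU.exists_bound_of_continuousOn (hcont 0)
  refine ⟨C.toNNReal, hUne, hcont, fun u hu => ?_, fun u hu =>
    (hC u hu).trans (Real.le_coe_toNNReal C)⟩
  refine LipschitzWith.of_dist_le_mul fun x y => ?_
  simpa [Prod.dist_eq] using hf.dist_le_mul (x, u) ⟨trivial, hu⟩ (y, u) ⟨trivial, hu⟩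

theorem cbvfPayoff_eq_obstacleValue {n m : ℕ} (f : (Fin n → ℝ) → (Fin m → ℝ) → Fin n → ℝ)
    (U : Set (Fin m → ℝ)) (β : ℝ → ℝ → ℝ) (g : (Fin n → ℝ) → ℝ) :
    cbvfPayoff f U β g = obstacleValue f U fun p => β (g p.1) p.2 := by
  funext x T
  refine congrArg sSup (Set.ext fun y => exists₂_congr fun u ξ => ?_)
  exact ⟨fun ⟨hu, hξ, hy⟩ => ⟨⟨hu.1, hu.2, hξ.1, hξ.2⟩, hy⟩,
    fun ⟨h, hy⟩ => ⟨⟨h.1, h.2⟩, ⟨h.3.1, h.3.2⟩, hy⟩⟩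

theorem isViscositySolnW_iff {n m : ℕ} {f : (Fin n → ℝ) → (Fin m → ℝ) → Fin n → ℝ}
    {U : Set (Fin m → ℝ)} {β : ℝ → ℝ → ℝ} {g : (Fin n → ℝ) → ℝ} {w : (Fin n → ℝ) × ℝ → ℝ} :
    IsViscositySolnW f U β g w ↔ IsObstacleSubsolution f U (fun p => β (g p.1) p.2) w ∧
      IsObstacleSupersolution f U (fun p => β (g p.1) p.2) w := by
  simp only [IsViscositySolnW, IsObstacleSubsolution, IsObstacleSupersolution, hamiltonian,
    ContinuousLinearMap.comp_apply, ContinuousLinearMap.inl_apply]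

theorem w_is_unique_viscosity_solution_general {E V : Type*} [NormedAddCommGroup E]
    [NormedSpace ℝ E] [FiniteDimensional ℝ E] [TopologicalSpace V] [MeasurableSpace V]
    [OpensMeasurableSpace V] {f : E → V → E} {U : Set V} {K C : ℝ≥0}
    (hf : IsLipschitzControlSystem f U K C) {ψ : E × ℝ → ℝ}
    (hψ : ContinuousOn ψ {p | 0 ≤ p.2}) :
    ContinuousOn (fun p : E × ℝ => obstacleValue f U ψ p.1 p.2) {p | 0 ≤ p.2} ∧
      (∀ x, obstacleValue f U ψ x 0 = ψ (x, 0)) ∧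
      (IsObstacleSubsolution f U ψ (fun p => obstacleValue f U ψ p.1 p.2) ∧
        IsObstacleSupersolution f U ψ (fun p => obstacleValue f U ψ p.1 p.2)) ∧
      ∀ w : E × ℝ → ℝ, ContinuousOn w {p | 0 ≤ p.2} → (∀ x, w (x, 0) = ψ (x, 0)) →
        IsObstacleSubsolution f U ψ w ∧ IsObstacleSupersolution f U ψ w →
        ∀ p, 0 ≤ p.2 → w p = obstacleValue f U ψ p.1 p.2 := by
  have : ProperSpace E := .of_locallyCompactSpace ℝ
  have hcont := hf.continuousOn_obstacleValue hψ
  have hzero := hf.obstacleValue_zero hψ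
  have hsub := hf.isObstacleSubsolution_obstacleValue hψ
  have hsuper := hf.isObstacleSupersolution_obstacleValue hψ
  refine ⟨hcont, hzero, ⟨hsub, hsuper⟩, fun w hw hw0 ⟨hwsub, hwsuper⟩ p hp => le_antisymm ?_ ?_⟩
  · exact hwsub.le_of_isObstacleSupersolution hsuper hf hψ hw hcont
      (fun x => ((hw0 x).trans (hzero x).symm).le) hp
  · exact hsub.le_of_isObstacleSupersolution hwsuper hf hψ hcont hw
      (fun x => ((hzero x).trans (hw0 x).symm).le) hp

/-- The function `w (x,T) = sup_{(u,ξ)} min_{t ∈ [0,T]} β_α (g (ξ t)) (T-t)`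
is continuous on `ℝⁿ × [0,∞)`, satisfies `w (·,0) = g`, and is the unique continuous
nonnegative function with this initial condition that is a viscosity solution on
`ℝⁿ × (0,∞)` of `max { ∂_T w - H(x,∇w), w - β_α (g x) T } = 0`. -/
theorem w_is_unique_viscosity_solution {n m : ℕ}
    (f : (Fin n → ℝ) → (Fin m → ℝ) → Fin n → ℝ) (U : Set (Fin m → ℝ))
    (hU : IsCompact U) (hUne : U.Nonempty)
    (hf : ∃ K : NNReal, LipschitzOnWith K (Function.uncurry f) (Set.univ ×ˢ U))
    (α : ℝ → ℝ) (hα : IsLocallyLipschitzClassK α)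
    (β : ℝ → ℝ → ℝ) (hβ : IsBetaFor α β)
    (g : (Fin n → ℝ) → ℝ) (hg : Continuous g) (hg0 : ∀ x, 0 ≤ g x) :
    ContinuousOn (fun p : (Fin n → ℝ) × ℝ => cbvfPayoff f U β g p.1 p.2)
      {p : (Fin n → ℝ) × ℝ | 0 ≤ p.2} ∧
    (∀ x : Fin n → ℝ, cbvfPayoff f U β g x 0 = g x) ∧
    IsViscositySolnW f U β g (fun p => cbvfPayoff f U β g p.1 p.2) ∧
    ∀ w' : (Fin n → ℝ) × ℝ → ℝ,
      ContinuousOn w' {p : (Fin n → ℝ) × ℝ | 0 ≤ p.2} →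
      (∀ p : (Fin n → ℝ) × ℝ, 0 ≤ p.2 → 0 ≤ w' p) →
      (∀ x : Fin n → ℝ, w' (x, 0) = g x) →
      IsViscositySolnW f U β g w' →
      ∀ p : (Fin n → ℝ) × ℝ, 0 ≤ p.2 → w' p = cbvfPayoff f U β g p.1 p.2 := by
  obtain ⟨K, hK⟩ := hf
  obtain ⟨C, hsystem⟩ := exists_isLipschitzControlSystem hU hUne hK
  have hψ : ContinuousOn (fun p : (Fin n → ℝ) × ℝ => β (g p.1) p.2) {p | 0 ≤ p.2} :=
    (hβ.continuousOn hα.1.2.1.monotoneOn).comp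
      (by fun_prop : ContinuousOn (fun p : (Fin n → ℝ) × ℝ => (g p.1, p.2)) {p | 0 ≤ p.2})
      fun p hp => ⟨hg0 p.1, hp⟩
  have hβ0 (x : Fin n → ℝ) : β (g x) 0 = g x := (hβ (g x) (hg0 x)).1
  obtain ⟨hcont, hzero, hvisc, huniq⟩ := w_is_unique_viscosity_solution_general hsystem hψ
  rw [cbvfPayoff_eq_obstacleValue]
  exact ⟨hcont, fun x => (hzero x).trans (hβ0 x), isViscositySolnW_iff.2 hvisc,
    fun w' hw' _ hw'0 hw'visc => huniq w' hw' (fun x => (hw'0 x).trans (hβ0 x).symm)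
      (isViscositySolnW_iff.1 hw'visc)⟩
end
end

section
/- Consider the system on ℝ² with admissible control set U = {−1, +1} and dynamics f((x₁,x₂), u) = (0, u) if x₁² + x₂² ≤ 1, and f((x₁,x₂), u) = ( x₁(1 − s)/s , x₂(1 − s)/s + u ) with s = √(x₁² + x₂²) if x₁² + x₂² > 1. Then the continuously differentiable function h(x₁,x₂) = 1 − x₁² − x₂² satisfies the CBF inequality everywhere: for all (x₁,x₂) ∈ ℝ², max_{u ∈ {−1,+1}} ∇h(x₁,x₂) · f((x₁,x₂), u) ≥ −h(x₁,x₂). -/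
open Set Filter MeasureTheory Topology

noncomputable section

/-- The piecewise dynamics of the counter-example: `f ((x₁,x₂), u) = (0, u)` inside the
closed unit disk, and
`f ((x₁,x₂), u) = (x₁ (1 - s)/s, x₂ (1 - s)/s + u)` with `s = √(x₁² + x₂²)` outside. -/
noncomputable def fCE (x : ℝ × ℝ) (u : ℝ) : ℝ × ℝ :=
  if x.1 ^ 2 + x.2 ^ 2 ≤ 1 then (0, u)
  else (x.1 * (1 - Real.sqrt (x.1 ^ 2 + x.2 ^ 2)) / Real.sqrt (x.1 ^ 2 + x.2 ^ 2),
        x.2 * (1 - Real.sqrt (x.1 ^ 2 + x.2 ^ 2)) / Real.sqrt (x.1 ^ 2 + x.2 ^ 2) + u)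

/-!
The system is control-affine, and since `u = 1` and `u = -1` are opposite, one of them contributes
nonnegatively to `∇h · f`; so the inequality need only be checked for the drift `f(x, 0)`. The drift
vanishes on the disk, where `-h ≤ 0`. Outside it is radial, of signed length `1 - s` with
`s = √(x₁² + x₂²)`, so that `∇h · f(x, 0) = 2 s (s - 1)`, which exceeds `-h = s² - 1` by `(s - 1)²`.
-/

theorem map_le_max_map_sub_map_add {E R F : Type*} [AddGroup E] [AddCommGroup R] [LinearOrder R]
    [IsOrderedAddMonoid R] [FunLike F E R] [AddMonoidHomClass F E R] (L : F) (v w : E) :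
    L v ≤ max (L (v - w)) (L (v + w)) := by
  rw [map_sub, map_add]
  rcases le_total (L w) 0 with h_nonpos | h_nonneg
  · exact le_max_of_le_left ((le_sub_self_iff _).mpr h_nonpos)
  · exact le_max_of_le_right (le_add_of_nonneg_right h_nonneg)

section Derivative

variable {𝕜 : Type*} [NontriviallyNormedField 𝕜]

theorem hasFDerivAt_const_sub_sq_sub_sq (c : 𝕜) (x : 𝕜 × 𝕜) :
    HasFDerivAt (fun y : 𝕜 × 𝕜 => c - y.1 ^ 2 - y.2 ^ 2)
      (-((2 * x.1) • ContinuousLinearMap.fst 𝕜 𝕜 𝕜) -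
        (2 * x.2) • ContinuousLinearMap.snd 𝕜 𝕜 𝕜) x := by
  simpa using ((hasFDerivAt_fst.pow 2).const_sub c).fun_sub (hasFDerivAt_snd.pow 2)

theorem fderiv_const_sub_sq_sub_sq_apply (c : 𝕜) (x v : 𝕜 × 𝕜) :
    fderiv 𝕜 (fun y : 𝕜 × 𝕜 => c - y.1 ^ 2 - y.2 ^ 2) x v =
      -2 * (x.1 * v.1 + x.2 * v.2) := by
  rw [(hasFDerivAt_const_sub_sq_sub_sq c x).fderiv]
  simp only [sub_apply, neg_apply, smul_apply, ContinuousLinearMap.coe_fst',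
    ContinuousLinearMap.coe_snd', smul_eq_mul]
  ring

end Derivative

theorem mul_radial_add_mul_radial (a b r : ℝ) :
    a * (a * r / √(a ^ 2 + b ^ 2)) + b * (b * r / √(a ^ 2 + b ^ 2)) = √(a ^ 2 + b ^ 2) * r :=
  calc
    _ = (a ^ 2 + b ^ 2) / √(a ^ 2 + b ^ 2) * r := by ring
    _ = √(a ^ 2 + b ^ 2) * r := by rw [Real.div_sqrt]

theorem fCE_eq_fCE_zero_add (x : ℝ × ℝ) (u : ℝ) : fCE x u = fCE x 0 + (0, u) := by
  unfold fCE
  split_ifs <;> simp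

theorem fCE_zero_of_le_one {x : ℝ × ℝ} (hx : x.1 ^ 2 + x.2 ^ 2 ≤ 1) : fCE x 0 = 0 :=
  if_pos hx

theorem mul_fCE_zero_add_mul_fCE_zero_of_one_lt {x : ℝ × ℝ} (hx : 1 < x.1 ^ 2 + x.2 ^ 2) :
    x.1 * (fCE x 0).1 + x.2 * (fCE x 0).2 =
      √(x.1 ^ 2 + x.2 ^ 2) * (1 - √(x.1 ^ 2 + x.2 ^ 2)) := by
  simp only [fCE, if_neg hx.not_ge, add_zero, mul_radial_add_mul_radial]

theorem neg_le_fderiv_fCE_zero (x : ℝ × ℝ) :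
    -(1 - x.1 ^ 2 - x.2 ^ 2) ≤
      fderiv ℝ (fun y : ℝ × ℝ => 1 - y.1 ^ 2 - y.2 ^ 2) x (fCE x 0) := by
  rcases le_or_gt (x.1 ^ 2 + x.2 ^ 2) 1 with h_in | h_out
  · rw [fCE_zero_of_le_one h_in, map_zero]
    linarith
  · rw [fderiv_const_sub_sq_sub_sq_apply, mul_fCE_zero_add_mul_fCE_zero_of_one_lt h_out]
    set s := √(x.1 ^ 2 + x.2 ^ 2)
    have h_sq : s ^ 2 = x.1 ^ 2 + x.2 ^ 2 := Real.sq_sqrt (by positivity)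
    calc
      -(1 - x.1 ^ 2 - x.2 ^ 2) = s ^ 2 - 1 := by rw [h_sq]; ring
      _ ≤ s ^ 2 - 1 + (s - 1) ^ 2 := le_add_of_nonneg_right (sq_nonneg _)
      _ = -2 * (s * (1 - s)) := by ring

/-- For the counter-example system with `U = {-1, +1}`, the function
`h (x₁,x₂) = 1 - x₁² - x₂²` satisfies the CBF inequality everywhere:
`max_{u ∈ {-1,+1}} ∇h(x) · f(x,u) ≥ -h x` for all `x ∈ ℝ²`. -/
theorem counterexample_cbf_inequality (x : ℝ × ℝ) :
    -(1 - x.1 ^ 2 - x.2 ^ 2) ≤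
      max (fderiv ℝ (fun y : ℝ × ℝ => 1 - y.1 ^ 2 - y.2 ^ 2) x (fCE x (-1)))
          (fderiv ℝ (fun y : ℝ × ℝ => 1 - y.1 ^ 2 - y.2 ^ 2) x (fCE x 1)) := by
  have h_neg : fCE x (-1) = fCE x 0 - (0, 1) := by
    rw [fCE_eq_fCE_zero_add, sub_eq_add_neg, Prod.neg_mk, neg_zero]
  rw [h_neg, fCE_eq_fCE_zero_add x 1]
  exact (neg_le_fderiv_fCE_zero x).trans (map_le_max_map_sub_map_add _ _ _)
end
end

section
/- Consider the system on ℝ² with admissible control set U = {−1, +1} and dynamics f((x₁,x₂), u) = (0, u) if x₁² + x₂² ≤ 1, and f((x₁,x₂), u) = ( x₁(1 − s)/s , x₂(1 − s)/s + u ) with s = √(x₁² + x₂²) if x₁² + x₂² > 1. Then the closed unit disk {(x₁,x₂) : x₁² + x₂² ≤ 1} is not control invariant: for every measurable u : [0,∞) → {−1,+1} and every continuous ξ : [0,∞) → ℝ² satisfying ξ(t) = (1,0) + ∫₀ᵗ f(ξ(s), u(s)) ds for all t ≥ 0, there exists t ≥ 0 with ξ(t)₁² + ξ(t)₂² > 1.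 -/
open Set Filter MeasureTheory Topology

noncomputable section

/-!
On the disk the first coordinate of the dynamics vanishes, so a trajectory that starts at `(1, 0)`
and stays in the disk moves only along the tangent line `x₁ = 1`, which meets the disk in the single
point `(1, 0)`. Hence the primitive of the control vanishes identically, and by Lebesgue
differentiation the control vanishes almost everywhere. No control with values in `{-1, 1}` does.
-/

theorem not_ae_restrict_eq_zero_of_ne_zero {α β : Type*} [MeasurableSpace α] [Zero β]
    {μ : Measure α} {s : Set α} {f : α → β} (hμs : μ s ≠ 0) (hf : ∀ x ∈ s, f x ≠ 0) :
    ¬ f =ᵐ[μ.restrict s] 0 := by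
  intro h0
  have h_null : μ.restrict s s = 0 := measure_mono_null hf (ae_iff.mp h0)
  exact hμs ((Measure.restrict_apply_self μ s).symm.trans h_null)

section IntervalIntegral

variable {E : Type*} [NormedAddCommGroup E] {f : ℝ → E} {a b : ℝ}

theorem intervalIntegrable_of_norm_le {μ : Measure ℝ} [IsLocallyFiniteMeasure μ] {C : ℝ}
    (hfm : AEStronglyMeasurable f (μ.restrict (uIoc a b))) (hC : ∀ t ∈ uIoc a b, ‖f t‖ ≤ C) :
    IntervalIntegrable f μ a b :=
  intervalIntegrable_const.mono_fun' hfm (ae_restrict_of_forall_mem measurableSet_uIoc hC)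

theorem ae_restrict_uIoc_eq_zero_of_intervalIntegral_eq_zero [NormedSpace ℝ E] [CompleteSpace E]
    (hf : IntervalIntegrable f volume a b) (h0 : ∀ t ∈ uIcc a b, ∫ s in a..t, f s = 0) :
    f =ᵐ[volume.restrict (uIoc a b)] 0 := by
  refine (ae_restrict_iff' measurableSet_uIoc).mpr ?_
  filter_upwards [hf.ae_hasDerivAt_integral, Measure.ae_ne volume (max a b)] with t hderiv ht_ne ht
  have h_nhds : uIcc a b ∈ 𝓝 t := Icc_mem_nhds ht.1 (lt_of_le_of_ne ht.2 ht_ne)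
  have h_zero : HasDerivAt (fun r => ∫ s in a..r, f s) 0 t :=
    (hasDerivAt_const t 0).congr_of_eventuallyEq (eventually_of_mem h_nhds h0)
  exact (hderiv (mem_of_mem_nhds h_nhds) a left_mem_uIcc).unique h_zero

end IntervalIntegral

section Dynamics

variable {u : ℝ → ℝ} {ξ : ℝ → ℝ × ℝ} {a b : ℝ}

theorem fCE_of_sq_add_sq_le_one {x : ℝ × ℝ} (hx : x.1 ^ 2 + x.2 ^ 2 ≤ 1) (v : ℝ) :
    fCE x v = (0, v) :=
  if_pos hx

theorem intervalIntegral_fCE_of_sq_add_sq_le_one {μ : Measure ℝ}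
    (hdisk : ∀ s ∈ uIcc a b, (ξ s).1 ^ 2 + (ξ s).2 ^ 2 ≤ 1) :
    ∫ s in a..b, fCE (ξ s) (u s) ∂μ = (0, ∫ s in a..b, u s ∂μ) := by
  calc ∫ s in a..b, fCE (ξ s) (u s) ∂μ
      = ∫ s in a..b, u s • ((0 : ℝ), (1 : ℝ)) ∂μ := by
        refine intervalIntegral.integral_congr fun s hs => ?_
        simp [fCE_of_sq_add_sq_le_one (hdisk s hs)]
    _ = (0, ∫ s in a..b, u s ∂μ) := by
        rw [intervalIntegral.integral_smul_const]
        simp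

theorem intervalIntegral_control_eq_zero_of_sq_add_sq_le_one {μ : Measure ℝ}
    (hξ : ξ b = ((1 : ℝ), (0 : ℝ)) + ∫ s in a..b, fCE (ξ s) (u s) ∂μ)
    (hdisk : ∀ s ∈ uIcc a b, (ξ s).1 ^ 2 + (ξ s).2 ^ 2 ≤ 1) :
    ∫ s in a..b, u s ∂μ = 0 := by
  have hξb : ξ b = (1, ∫ s in a..b, u s ∂μ) := by
    simp [hξ, intervalIntegral_fCE_of_sq_add_sq_le_one hdisk]
  have h_sq : 1 ^ 2 + (∫ s in a..b, u s ∂μ) ^ 2 ≤ 1 := by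
    simpa only [hξb] using hdisk b right_mem_uIcc
  exact (sq_nonpos_iff _).mp (by linarith)

theorem counterexample_not_control_invariant_general
    (hu : IntervalIntegrable u volume a b) (hu0 : ¬ u =ᵐ[volume.restrict (uIoc a b)] 0)
    (hξ : ∀ t ∈ uIcc a b, ξ t = ((1 : ℝ), (0 : ℝ)) + ∫ s in a..t, fCE (ξ s) (u s)) :
    ∃ t ∈ uIcc a b, 1 < (ξ t).1 ^ 2 + (ξ t).2 ^ 2 := by
  by_contra! hdisk
  refine hu0 (ae_restrict_uIoc_eq_zero_of_intervalIntegral_eq_zero hu fun t ht => ?_)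
  exact intervalIntegral_control_eq_zero_of_sq_add_sq_le_one (hξ t ht) fun s hs =>
    hdisk s (uIcc_subset_uIcc_left ht hs)

end Dynamics

/-- For the counter-example system, the closed unit disk is not control
invariant: every admissible trajectory starting from `(1,0)` must eventually leave the disk. -/
theorem counterexample_not_control_invariant
    (u : ℝ → ℝ) (hu : Measurable u) (huU : ∀ t : ℝ, 0 ≤ t → u t ∈ ({-1, 1} : Set ℝ))
    (ξ : ℝ → ℝ × ℝ) (hξc : Continuous ξ)
    (hξ : ∀ t : ℝ, 0 ≤ t → ξ t = ((1 : ℝ), (0 : ℝ)) + ∫ s in (0 : ℝ)..t, fCE (ξ s) (u s)) :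
    ∃ t : ℝ, 0 ≤ t ∧ 1 < (ξ t).1 ^ 2 + (ξ t).2 ^ 2 := by
  have hu_norm : ∀ t ∈ uIoc (0 : ℝ) 1, ‖u t‖ = 1 := fun t ht => by
    rw [uIoc_of_le zero_le_one] at ht
    rcases huU t ht.1.le with h | (h : u t = 1) <;> simp [h]
  have hu_int : IntervalIntegrable u volume 0 1 :=
    intervalIntegrable_of_norm_le hu.aestronglyMeasurable fun t ht => (hu_norm t ht).le
  have hu_ne : ¬ u =ᵐ[volume.restrict (uIoc 0 1)] 0 :=
    not_ae_restrict_eq_zero_of_ne_zero (by simp) fun t ht =>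
      norm_ne_zero_iff.mp (by simp [hu_norm t ht])
  have h_nonneg : ∀ t ∈ uIcc (0 : ℝ) 1, 0 ≤ t := by simp +contextual [uIcc_of_le]
  obtain ⟨t, ht, h_out⟩ := counterexample_not_control_invariant_general hu_int hu_ne
    fun t ht => hξ t (h_nonneg t ht)
  exact ⟨t, h_nonneg t ht, h_out⟩
end
end
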